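/- arXiv:1609.02527 — 2 statements merged into one kernel-verified Lean document; each statement's English description precedes it below -/
import Mathlib

section
/- Spectral gap for the tagged-particle exclusion process in finite volume: For every ρ ∈ (0,1) there exists a constant C_S(d,ρ) < ∞, which may be chosen nondecreasing in ρ, such that for every integer ℓ ≥ 1 and every function f : Ω_ℓ → ℝ, one has ⟨(f − ⟨f⟩_{ℓ,ρ})²⟩_{ℓ,ρ} ≤ C_S ℓ² Σ_{e ∈ 𝔹_ℓ} ⟨a_e (f^e − f)²⟩_{ℓ,ρ}. -/
open Finset

noncomputable section

/-- The box `B_ℓ = {−ℓ,…,ℓ}^d` in `ℤ^d`. -/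
def Box (d ℓ : ℕ) : Finset (Fin d → ℤ) :=
  Finset.Icc (fun _ => -(ℓ : ℤ)) (fun _ => (ℓ : ℤ))

/-- A site of the box `B_ℓ`. -/
abbrev Site (d ℓ : ℕ) := {x : Fin d → ℤ // x ∈ Box d ℓ}

/-- A particle configuration `η ∈ {0,1}^{B_ℓ}`. -/
abbrev Config (d ℓ : ℕ) := Site d ℓ → Bool

/-- A state `(x,η)` of the tagged-particle exclusion process in `B_ℓ`; the constraint
`η(x) = 1` defining `Ω_ℓ` is imposed on the support of the reversible measure below. -/
abbrev TState (d ℓ : ℕ) := Site d ℓ × Config d ℓ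

/-- Two sites are neighbours when their Euclidean distance is `1`. -/
abbrev SiteAdj {d ℓ : ℕ} (y z : Site d ℓ) : Prop :=
  (∑ i, ((y : Fin d → ℤ) i - (z : Fin d → ℤ) i) ^ 2) = 1

/-- Number of particles of a configuration. -/
def numParticles {d ℓ : ℕ} (η : Config d ℓ) : ℕ :=
  (Finset.univ.filter fun z => η z = true).card

open scoped Classical in
/-- The finite set `{(x,η) ∈ Ω_ℓ : Σ_{z ∈ B_ℓ} η(z) = ⌊ρ |B_ℓ|⌋}`. -/
def taggedSlice (d ℓ : ℕ) (ρ : ℝ) : Finset (TState d ℓ) :=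
  Finset.univ.filter fun ω =>
    ω.2 ω.1 = true ∧ (numParticles ω.2 : ℤ) = ⌊ρ * ((Box d ℓ).card : ℝ)⌋

/-- Expectation with respect to the uniform probability measure `⟨·⟩_{ℓ,ρ}` on the set
`{(x,η) ∈ Ω_ℓ : Σ_{z ∈ B_ℓ} η(z) = ⌊ρ |B_ℓ|⌋}`. -/
def taggedExp (d ℓ : ℕ) (ρ : ℝ) (g : TState d ℓ → ℝ) : ℝ :=
  (∑ ω ∈ taggedSlice d ℓ ρ, g ω) / ((taggedSlice d ℓ ρ).card : ℝ)

/-- For the edge `e = {y,z}`, the map `f ↦ f^e`, where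
`f^e (x, η) := f (x^e, η^e)`, `x^e` is the image of `x` under the transposition of the
endpoints of `e`, and `η^e (x) = η (x^e)`. -/
def edgeMap {d ℓ : ℕ} (y z : Site d ℓ) (f : TState d ℓ → ℝ) : TState d ℓ → ℝ :=
  fun ω => f (Equiv.swap y z ω.1, ω.2 ∘ Equiv.swap y z)

/-- The exclusion rate `a_e(η) = 1_{η^e ≠ η}` of the edge `e = {y,z}`: it equals `1`
exactly when precisely one endpoint of `e` is occupied. -/
def rate {d ℓ : ℕ} (y z : Site d ℓ) (η : Config d ℓ) : ℝ :=
  if η y ≠ η z then 1 else 0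

namespace TaggedExclusion

open Equiv

set_option linter.unusedSectionVars false

variable {V : Type*} [Fintype V] [DecidableEq V]

/-- The action of a permutation of the sites on states `(x, η)`. -/
def act (τ : Perm V) (ω : V × (V → Bool)) : V × (V → Bool) := (τ ω.1, ω.2 ∘ τ.symm)

lemma act_mul (τ₂ τ₁ : Perm V) (ω : V × (V → Bool)) :
    act (τ₂ * τ₁) ω = act τ₂ (act τ₁ ω) := rfl

lemma act_one (ω : V × (V → Bool)) : act (1 : Perm V) ω = ω := rfl

lemma act_injective (τ : Perm V) : Function.Injective (act τ) := by
  intro ω ω' h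
  have := congrArg (act τ⁻¹) h
  simpa [← act_mul, act_one] using this

lemma sum_act {X : Finset (V × (V → Bool))} (hX : ∀ τ : Perm V, ∀ ω ∈ X, act τ ω ∈ X)
    (τ : Perm V) (h : V × (V → Bool) → ℝ) : ∑ ω ∈ X, h (act τ ω) = ∑ ω ∈ X, h ω := by
  refine Finset.sum_nbij' (act τ) (act τ⁻¹) (fun ω hω => hX _ _ hω) (fun ω hω => hX _ _ hω)
    (fun ω _ => ?_) (fun ω _ => ?_) (fun _ _ => rfl)
  · rw [← act_mul, inv_mul_cancel, act_one]
  · rw [← act_mul, mul_inv_cancel, act_one]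

/-- The permutations supported in `S`. -/
def suppPerms (S : Finset V) : Finset (Perm V) :=
  Finset.univ.filter fun τ => ∀ v, v ∉ S → τ v = v

lemma mem_suppPerms {S : Finset V} {τ : Perm V} :
    τ ∈ suppPerms S ↔ ∀ v, v ∉ S → τ v = v := by simp [suppPerms]

lemma one_mem_suppPerms (S : Finset V) : (1 : Perm V) ∈ suppPerms S := by
  simp [mem_suppPerms]

lemma card_suppPerms_pos (S : Finset V) : (0 : ℝ) < (suppPerms S).card := by
  exact_mod_cast Finset.card_pos.2 ⟨1, one_mem_suppPerms S⟩

lemma mul_mem_suppPerms {S : Finset V} {σ τ : Perm V} (hσ : σ ∈ suppPerms S)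
    (hτ : τ ∈ suppPerms S) : σ * τ ∈ suppPerms S := by
  rw [mem_suppPerms] at *
  intro v hv
  rw [Perm.mul_apply, hτ v hv, hσ v hv]

lemma inv_mem_suppPerms {S : Finset V} {σ : Perm V} (hσ : σ ∈ suppPerms S) :
    σ⁻¹ ∈ suppPerms S := by
  rw [mem_suppPerms] at *
  intro v hv
  rw [Perm.inv_eq_iff_eq, hσ v hv]

lemma suppPerms_mono {S S' : Finset V} (h : S ⊆ S') : suppPerms S ⊆ suppPerms S' := by
  intro τ hτ
  rw [mem_suppPerms] at *
  exact fun v hv => hτ v fun hv' => hv (h hv')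

/-- Average of `F` over the rearrangements of the sites of `S`. -/
def avg (S : Finset V) (F : V × (V → Bool) → ℝ) (ω : V × (V → Bool)) : ℝ :=
  (∑ τ ∈ suppPerms S, F (act τ ω)) / (suppPerms S).card

lemma avg_act {S : Finset V} (F : V × (V → Bool) → ℝ) {σ : Perm V} (hσ : σ ∈ suppPerms S)
    (ω : V × (V → Bool)) : avg S F (act σ ω) = avg S F ω := by
  unfold avg
  congr 1
  refine Finset.sum_nbij' (· * σ) (· * σ⁻¹) (fun τ hτ => mul_mem_suppPerms hτ hσ)
    (fun τ hτ => mul_mem_suppPerms hτ (inv_mem_suppPerms hσ)) (fun τ _ => ?_) (fun τ _ => ?_)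
    (fun _ _ => rfl) <;> simp

lemma sum_suppPerms_erase {S : Finset V} {k : V} (hk : k ∈ S) (h : Perm V → ℝ) :
    ∑ τ ∈ suppPerms S, h τ =
      ∑ τ ∈ suppPerms (S.erase k), ∑ j ∈ S, h (swap k j * τ) := by
  rw [← Finset.sum_product']
  have hfix : ∀ τ ∈ suppPerms (S.erase k), τ k = k := fun τ hτ =>
    (mem_suppPerms.1 hτ) k (by simp)
  have hsw : ∀ j ∈ S, swap k j ∈ suppPerms S := fun j hj => by
    rw [mem_suppPerms]
    intro v hv
    exact swap_apply_of_ne_of_ne (fun h => hv (h ▸ hk)) (fun h => hv (h ▸ hj))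
  refine Finset.sum_nbij' (fun τ => (swap k (τ k) * τ, τ k)) (fun q => swap k q.2 * q.1)
    ?_ ?_ ?_ ?_ ?_
  · intro τ hτ
    have hkS : τ k ∈ S := by
      by_contra hc
      have h1 := mem_suppPerms.1 hτ _ hc
      exact hc (by rw [τ.injective h1]; exact hk)
    refine Finset.mem_product.2 ⟨mem_suppPerms.2 fun v hv => ?_, hkS⟩
    by_cases hvk : v = k
    · subst hvk; simp
    · have hvS : v ∉ S := fun h => hv (Finset.mem_erase.2 ⟨hvk, h⟩)
      exact mem_suppPerms.1 (mul_mem_suppPerms (hsw _ hkS) hτ) v hvS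
  · intro q hq
    obtain ⟨h1, h2⟩ := Finset.mem_product.1 hq
    exact mul_mem_suppPerms (hsw _ h2) (suppPerms_mono (Finset.erase_subset _ _) h1)
  · intro τ _
    simp [← mul_assoc]
  · rintro ⟨τ, j⟩ hq
    obtain ⟨h1, h2⟩ := Finset.mem_product.1 hq
    simp only at h1 h2
    simp [hfix τ h1, ← mul_assoc]
  · intro τ _
    simp [← mul_assoc]

lemma card_suppPerms_erase {S : Finset V} {k : V} (hk : k ∈ S) :
    ((suppPerms S).card : ℝ) = (suppPerms (S.erase k)).card * S.card := by
  have := sum_suppPerms_erase hk (fun _ => 1)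
  simpa using this

lemma avg_erase {S : Finset V} {k : V} (hk : k ∈ S) (F : V × (V → Bool) → ℝ)
    (ω : V × (V → Bool)) :
    avg S F ω = avg (S.erase k) (fun ω => (∑ j ∈ S, F (act (swap k j) ω)) / S.card) ω := by
  unfold avg
  rw [sum_suppPerms_erase hk (fun τ => F (act τ ω)), card_suppPerms_erase hk,
    ← Finset.sum_div, div_div, mul_comm ((suppPerms (S.erase k)).card : ℝ)]
  rfl

/-- Jensen's inequality for the square of an average. -/
lemma sq_sum_div_card_le {ι : Type*} (s : Finset ι) (f : ι → ℝ) :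
    ((∑ i ∈ s, f i) / s.card) ^ 2 ≤ (∑ i ∈ s, f i ^ 2) / s.card := by
  rcases s.eq_empty_or_nonempty with rfl | hs
  · simp
  have hc : (0 : ℝ) < s.card := by exact_mod_cast hs.card_pos
  rw [div_pow, div_le_div_iff₀ (by positivity) hc]
  nlinarith [sq_sum_le_card_mul_sum_sq (s := s) (f := f)]

/-- The quadratic form of the exchange of the contents of `u` and `w`. -/
def exchangeForm (X : Finset (V × (V → Bool))) (F : V × (V → Bool) → ℝ) (u w : V) : ℝ :=
  ∑ ω ∈ X, (F (act (swap u w) ω) - F ω) ^ 2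

lemma exchangeForm_nonneg (X : Finset (V × (V → Bool))) (F : V × (V → Bool) → ℝ) (u w : V) :
    0 ≤ exchangeForm X F u w := Finset.sum_nonneg fun _ _ => sq_nonneg _

lemma exchangeForm_self (X : Finset (V × (V → Bool))) (F : V × (V → Bool) → ℝ) (u : V) :
    exchangeForm X F u u = 0 := by
  unfold exchangeForm
  refine Finset.sum_eq_zero fun ω _ => ?_
  rw [swap_self]
  simp [show act (Equiv.refl V) ω = ω from rfl]

lemma sum_sq_sub_avg_le_erase {X : Finset (V × (V → Bool))}
    (hX : ∀ τ : Perm V, ∀ ω ∈ X, act τ ω ∈ X) (F : V × (V → Bool) → ℝ)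
    {S : Finset V} {k : V} (hk : k ∈ S) :
    ∑ ω ∈ X, (F ω - avg S F ω) ^ 2 ≤
      ∑ ω ∈ X, (F ω - avg (S.erase k) F ω) ^ 2 +
        (∑ j ∈ S, exchangeForm X F k j) / S.card := by
  set S' := S.erase k with hS'
  set H : V × (V → Bool) → ℝ := fun ω => avg S' F ω - avg S F ω with hH
  have hHinv : ∀ τ ∈ suppPerms S', ∀ ω, H (act τ ω) = H ω := fun τ hτ ω => by
    simp only [hH]
    rw [avg_act F hτ, avg_act F (suppPerms_mono (Finset.erase_subset _ _) hτ)]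
  have hcross : ∑ ω ∈ X, (F ω - avg S' F ω) * H ω = 0 := by
    have h1 : ∀ τ ∈ suppPerms S', ∑ ω ∈ X, F (act τ ω) * H ω = ∑ ω ∈ X, F ω * H ω := by
      intro τ hτ
      rw [← sum_act hX τ (fun ω => F ω * H ω)]
      exact Finset.sum_congr rfl fun ω _ => by rw [hHinv τ hτ]
    have h2 : ∑ ω ∈ X, avg S' F ω * H ω = ∑ ω ∈ X, F ω * H ω := by
      have hc := card_suppPerms_pos S'
      have : ∑ ω ∈ X, avg S' F ω * H ω =
          (∑ τ ∈ suppPerms S', ∑ ω ∈ X, F (act τ ω) * H ω) / (suppPerms S').card := by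
        rw [Finset.sum_comm, Finset.sum_div]
        refine Finset.sum_congr rfl fun ω _ => ?_
        rw [avg, ← Finset.sum_mul]; ring
      rw [this, Finset.sum_congr rfl h1, Finset.sum_const, nsmul_eq_mul]
      field_simp
    simp only [sub_mul, Finset.sum_sub_distrib]
    linarith
  have hpyth : ∑ ω ∈ X, (F ω - avg S F ω) ^ 2 =
      ∑ ω ∈ X, (F ω - avg S' F ω) ^ 2 + ∑ ω ∈ X, H ω ^ 2 := by
    have : ∑ ω ∈ X, (F ω - avg S F ω) ^ 2 = ∑ ω ∈ X, ((F ω - avg S' F ω) ^ 2 +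
        2 * ((F ω - avg S' F ω) * H ω) + H ω ^ 2) :=
      Finset.sum_congr rfl fun ω _ => by simp only [hH]; ring
    rw [this, Finset.sum_add_distrib, Finset.sum_add_distrib, ← Finset.mul_sum, hcross]
    ring
  rw [hpyth]
  gcongr
  have hSc : (0 : ℝ) < S.card := by exact_mod_cast Finset.card_pos.2 ⟨k, hk⟩
  set J : V × (V → Bool) → ℝ := fun ω => (∑ j ∈ S, (F ω - F (act (swap k j) ω))) / S.card with hJ
  have hHJ : ∀ ω, H ω = (∑ τ ∈ suppPerms S', J (act τ ω)) / (suppPerms S').card := by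
    intro ω
    simp only [hH]
    rw [avg_erase hk]
    simp only [avg, hJ, ← hS']
    rw [← sub_div, ← Finset.sum_sub_distrib]
    congr 1
    refine Finset.sum_congr rfl fun τ _ => ?_
    rw [Finset.sum_sub_distrib, Finset.sum_const, nsmul_eq_mul]
    field_simp
  calc ∑ ω ∈ X, H ω ^ 2
      ≤ ∑ ω ∈ X, (∑ τ ∈ suppPerms S', J (act τ ω) ^ 2) / (suppPerms S').card :=
        Finset.sum_le_sum fun ω _ => by rw [hHJ]; exact sq_sum_div_card_le _ _
    _ = ∑ ω ∈ X, J ω ^ 2 := by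
        have hc := card_suppPerms_pos S'
        rw [← Finset.sum_div, Finset.sum_comm,
          Finset.sum_congr rfl fun τ _ => sum_act hX τ (fun ω => J ω ^ 2),
          Finset.sum_const, nsmul_eq_mul]
        field_simp
    _ ≤ ∑ ω ∈ X, (∑ j ∈ S, (F ω - F (act (swap k j) ω)) ^ 2) / S.card :=
        Finset.sum_le_sum fun ω _ => sq_sum_div_card_le _ _
    _ = (∑ j ∈ S, exchangeForm X F k j) / S.card := by
        rw [← Finset.sum_div, Finset.sum_comm]
        congr 1
        refine Finset.sum_congr rfl fun j _ => Finset.sum_congr rfl fun ω _ => ?_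
        ring

lemma sum_erase_pairs {S : Finset V} (E : V → V → ℝ) (h0 : ∀ u, E u u = 0) :
    ∑ k ∈ S, ∑ u ∈ S.erase k, ∑ w ∈ S.erase k, E u w =
      ((S.card : ℝ) - 2) * ∑ u ∈ S, ∑ w ∈ S, E u w := by
  have h1 : ∀ k ∈ S, ∑ u ∈ S.erase k, ∑ w ∈ S.erase k, E u w =
      ∑ u ∈ S, ∑ w ∈ S, E u w - ∑ w ∈ S, E k w - ∑ u ∈ S, E u k := by
    intro k hk
    have h2 : ∀ g : V → ℝ, ∑ u ∈ S.erase k, g u = ∑ u ∈ S, g u - g k := fun g => by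
      rw [← Finset.add_sum_erase S g hk]; ring
    simp only [h2, Finset.sum_sub_distrib, h0]
    ring
  rw [Finset.sum_congr rfl h1, Finset.sum_sub_distrib, Finset.sum_sub_distrib, Finset.sum_const,
    nsmul_eq_mul, Finset.sum_comm (f := fun k u => E u k)]
  ring

/-- Mean-field Poincaré inequality for random transpositions. -/
lemma card_mul_sum_sq_sub_avg_le {X : Finset (V × (V → Bool))}
    (hX : ∀ τ : Perm V, ∀ ω ∈ X, act τ ω ∈ X) (F : V × (V → Bool) → ℝ) (S : Finset V) :
    (S.card : ℝ) * ∑ ω ∈ X, (F ω - avg S F ω) ^ 2 ≤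
      ∑ u ∈ S, ∑ w ∈ S, exchangeForm X F u w := by
  induction hn : S.card generalizing S with
  | zero => rw [Finset.card_eq_zero.1 hn]; simp
  | succ n ih =>
    set N := ∑ ω ∈ X, (F ω - avg S F ω) ^ 2 with hN
    set T := ∑ u ∈ S, ∑ w ∈ S, exchangeForm X F u w with hT
    have hT0 : 0 ≤ T := Finset.sum_nonneg fun _ _ => Finset.sum_nonneg fun _ _ =>
      exchangeForm_nonneg _ _ _ _
    have hcard : (S.card : ℝ) = n + 1 := by rw [hn]; push_cast; ring
    have hstep : ∀ k ∈ S, N ≤ ∑ ω ∈ X, (F ω - avg (S.erase k) F ω) ^ 2 +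
        (∑ j ∈ S, exchangeForm X F k j) / S.card := fun k hk => sum_sq_sub_avg_le_erase hX F hk
    have hih : ∀ k ∈ S, (n : ℝ) * ∑ ω ∈ X, (F ω - avg (S.erase k) F ω) ^ 2 ≤
        ∑ u ∈ S.erase k, ∑ w ∈ S.erase k, exchangeForm X F u w := fun k hk =>
      ih (S.erase k) (by rw [Finset.card_erase_of_mem hk, hn]; rfl)
    rcases Nat.eq_zero_or_pos n with rfl | hpos
    · obtain ⟨k, rfl⟩ := Finset.card_eq_one.1 hn
      have := hstep k (by simp)
      have he : (∅ : Finset V) = ({k} : Finset V).erase k := by simp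
      have h0 : ∀ ω : V × (V → Bool), avg (({k} : Finset V).erase k) F ω = F ω := by
        intro ω
        rw [← he]
        have : suppPerms (∅ : Finset V) = {1} := by
          ext τ
          rw [mem_suppPerms, Finset.mem_singleton]
          simp [Equiv.ext_iff]
        simp [avg, this, act_one]
      simp only [h0, Finset.sum_singleton, exchangeForm_self] at this
      simp at this
      push_cast
      linarith
    · have hnR : (1 : ℝ) ≤ n := by exact_mod_cast hpos
      have hsum : ((n : ℝ) + 1) * (n * N) ≤ (n - 1) * T + n * (T / (n + 1)) := by
        have h1 : ∑ k ∈ S, (n : ℝ) * N ≤ ∑ k ∈ S, (∑ u ∈ S.erase k, ∑ w ∈ S.erase k,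
            exchangeForm X F u w + n * ((∑ j ∈ S, exchangeForm X F k j) / S.card)) := by
          refine Finset.sum_le_sum fun k hk => ?_
          have h2 := mul_le_mul_of_nonneg_left (hstep k hk) (by linarith : (0 : ℝ) ≤ n)
          have h3 := hih k hk
          linarith
        rw [Finset.sum_add_distrib, sum_erase_pairs _ (exchangeForm_self X F), Finset.sum_const,
          ← Finset.mul_sum, ← Finset.sum_div, nsmul_eq_mul, hcard] at h1
        calc _ ≤ _ := h1
          _ = _ := by ring
      have h4 : (n : ℝ) * (T / (n + 1)) ≤ T := by
        rw [← mul_div_assoc, div_le_iff₀ (by linarith)]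
        nlinarith
      push_cast
      nlinarith

/-- Variance bound by the mean-field exchange form, for a transitive action. -/
lemma card_mul_sum_sq_sub_mean_le {X : Finset (V × (V → Bool))}
    (hX : ∀ τ : Perm V, ∀ ω ∈ X, act τ ω ∈ X)
    (htrans : ∀ ω ∈ X, ∀ ω' ∈ X, ∃ τ : Perm V, act τ ω = ω') (F : V × (V → Bool) → ℝ) :
    (Fintype.card V : ℝ) * ∑ ω ∈ X, (F ω - (∑ ω' ∈ X, F ω') / X.card) ^ 2 ≤
      ∑ u, ∑ w, exchangeForm X F u w := by
  refine le_trans ?_ (card_mul_sum_sq_sub_avg_le hX F Finset.univ)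
  rw [Finset.card_univ]
  refine mul_le_mul_of_nonneg_left ?_ (Nat.cast_nonneg _)
  rcases X.eq_empty_or_nonempty with rfl | ⟨ω₀, h₀⟩
  · simp
  set c := avg Finset.univ F ω₀ with hc
  have hconst : ∀ ω ∈ X, avg Finset.univ F ω = c := by
    intro ω hω
    obtain ⟨τ, rfl⟩ := htrans ω₀ h₀ ω hω
    exact avg_act F (by simp [mem_suppPerms]) _
  have hcard : (0 : ℝ) < X.card := by exact_mod_cast Finset.card_pos.2 ⟨ω₀, h₀⟩
  have hrw : ∑ ω ∈ X, (F ω - avg Finset.univ F ω) ^ 2 = ∑ ω ∈ X, (F ω - c) ^ 2 :=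
    Finset.sum_congr rfl fun ω hω => by rw [hconst ω hω]
  rw [hrw]
  set m := (∑ ω' ∈ X, F ω') / X.card with hm
  have hS : ∑ ω' ∈ X, F ω' = m * X.card := by rw [hm]; field_simp
  have key : ∑ ω ∈ X, (F ω - c) ^ 2 = ∑ ω ∈ X, (F ω - m) ^ 2 + X.card * (m - c) ^ 2 := by
    have : ∀ ω ∈ X, (F ω - c) ^ 2 = (F ω - m) ^ 2 + (2 * (m - c) * F ω + (c ^ 2 - m ^ 2)) :=
      fun ω _ => by ring
    rw [Finset.sum_congr rfl this, Finset.sum_add_distrib, Finset.sum_add_distrib,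
      ← Finset.mul_sum, hS, Finset.sum_const, nsmul_eq_mul]
    ring
  rw [key]
  nlinarith [mul_nonneg hcard.le (sq_nonneg (m - c))]

/-- States of `X` whose tagged particle sits at `x`. -/
def tagAt (X : Finset (V × (V → Bool))) (x : V) : Finset (V × (V → Bool)) :=
  X.filter fun ω => ω.1 = x

/-- States of `X` whose tagged particle sits at `x` and for which `h` is empty. -/
def tagHole (X : Finset (V × (V → Bool))) (x h : V) : Finset (V × (V → Bool)) :=
  X.filter fun ω => ω.1 = x ∧ ω.2 h = false

lemma tagHole_subset (X : Finset (V × (V → Bool))) (x h : V) : tagHole X x h ⊆ tagAt X x := by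
  intro ω hω
  simp only [tagHole, tagAt, Finset.mem_filter] at *
  exact ⟨hω.1, hω.2.1⟩

lemma act_mem_tagAt {X : Finset (V × (V → Bool))}
    (hX : ∀ τ : Perm V, ∀ ω ∈ X, act τ ω ∈ X) {τ : Perm V} {x y : V} (hxy : τ x = y) :
    ∀ ω ∈ tagAt X x, act τ ω ∈ tagAt X y := by
  intro ω hω
  simp only [tagAt, Finset.mem_filter] at *
  exact ⟨hX τ ω hω.1, by simp [act, hω.2, hxy]⟩

lemma act_mem_tagHole {X : Finset (V × (V → Bool))}
    (hX : ∀ τ : Perm V, ∀ ω ∈ X, act τ ω ∈ X) {τ : Perm V} {x y h k : V} (hxy : τ x = y)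
    (hhk : τ h = k) : ∀ ω ∈ tagHole X x h, act τ ω ∈ tagHole X y k := by
  intro ω hω
  simp only [tagHole, Finset.mem_filter] at *
  refine ⟨hX τ ω hω.1, by simp [act, hω.2.1, hxy], ?_⟩
  simp [act, ← hhk, hω.2.2]

/-- The `ℓ²` norm over `Y` of the increment of `F` under the rearrangement `τ`. -/
def incr (F : V × (V → Bool) → ℝ) (Y : Finset (V × (V → Bool))) (τ : Perm V) : ℝ :=
  √(∑ ω ∈ Y, (F (act τ ω) - F ω) ^ 2)

section incr

variable (F : V × (V → Bool) → ℝ)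

lemma incr_nonneg (Y : Finset (V × (V → Bool))) (τ : Perm V) : 0 ≤ incr F Y τ :=
  Real.sqrt_nonneg _

lemma incr_sq (Y : Finset (V × (V → Bool))) (τ : Perm V) :
    incr F Y τ ^ 2 = ∑ ω ∈ Y, (F (act τ ω) - F ω) ^ 2 :=
  Real.sq_sqrt (Finset.sum_nonneg fun _ _ => sq_nonneg _)

lemma incr_one (Y : Finset (V × (V → Bool))) : incr F Y 1 = 0 := by
  simp [incr, act_one]

lemma incr_swap_self (Y : Finset (V × (V → Bool))) (a : V) : incr F Y (swap a a) = 0 := by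
  rw [swap_self]; exact incr_one F Y

lemma incr_mono {Y Z : Finset (V × (V → Bool))} (h : Y ⊆ Z) (τ : Perm V) :
    incr F Y τ ≤ incr F Z τ :=
  Real.sqrt_le_sqrt (Finset.sum_le_sum_of_subset_of_nonneg h fun _ _ _ => sq_nonneg _)

lemma sqrt_sum_add_sq_le {ι : Type*} (s : Finset ι) (f g : ι → ℝ) :
    √(∑ i ∈ s, (f i + g i) ^ 2) ≤ √(∑ i ∈ s, f i ^ 2) + √(∑ i ∈ s, g i ^ 2) := by
  have hf : 0 ≤ ∑ i ∈ s, f i ^ 2 := Finset.sum_nonneg fun _ _ => sq_nonneg _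
  have hg : 0 ≤ ∑ i ∈ s, g i ^ 2 := Finset.sum_nonneg fun _ _ => sq_nonneg _
  refine Real.sqrt_le_iff.2 ⟨by positivity, ?_⟩
  have hcs : ∑ i ∈ s, f i * g i ≤ √(∑ i ∈ s, f i ^ 2) * √(∑ i ∈ s, g i ^ 2) :=
    Real.sum_mul_le_sqrt_mul_sqrt s f g
  have : ∑ i ∈ s, (f i + g i) ^ 2 =
      ∑ i ∈ s, f i ^ 2 + 2 * ∑ i ∈ s, f i * g i + ∑ i ∈ s, g i ^ 2 := by
    rw [Finset.mul_sum, ← Finset.sum_add_distrib, ← Finset.sum_add_distrib]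
    exact Finset.sum_congr rfl fun _ _ => by ring
  rw [this, add_sq, Real.sq_sqrt hf, Real.sq_sqrt hg]
  linarith

lemma incr_mul_le {Y Z : Finset (V × (V → Bool))} {τ₁ : Perm V} (τ₂ : Perm V)
    (h : ∀ ω ∈ Y, act τ₁ ω ∈ Z) : incr F Y (τ₂ * τ₁) ≤ incr F Y τ₁ + incr F Z τ₂ := by
  have h1 : incr F Y (τ₂ * τ₁) = √(∑ ω ∈ Y, ((F (act τ₁ ω) - F ω) +
      (F (act τ₂ (act τ₁ ω)) - F (act τ₁ ω))) ^ 2) := by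
    unfold incr
    congr 1
    exact Finset.sum_congr rfl fun ω _ => by rw [act_mul]; ring
  rw [h1]
  refine (sqrt_sum_add_sq_le Y _ _).trans ?_
  gcongr
  · exact le_rfl
  refine Real.sqrt_le_sqrt ?_
  rw [← Finset.sum_image (f := fun ω => (F (act τ₂ ω) - F ω) ^ 2)
    (fun a _ b _ hab => act_injective τ₁ hab)]
  exact Finset.sum_le_sum_of_subset_of_nonneg (Finset.image_subset_iff.2 h)
    fun _ _ _ => sq_nonneg _

end incr

section ladder

variable (X : Finset (V × (V → Bool))) (F : V × (V → Bool) → ℝ)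

/-- Dirichlet energy of the edge `{a, b}` when the tagged particle sits at `x`. -/
def edgeEnergyAt (x a b : V) : ℝ :=
  ∑ ω ∈ tagAt X x, if ω.2 a ≠ ω.2 b then (F (act (swap a b) ω) - F ω) ^ 2 else 0

/-- Dirichlet energy of the edge `{a, b}`. -/
def edgeEnergy (a b : V) : ℝ :=
  ∑ ω ∈ X, if ω.2 a ≠ ω.2 b then (F (act (swap a b) ω) - F ω) ^ 2 else 0

lemma edgeEnergyAt_nonneg (x a b : V) : 0 ≤ edgeEnergyAt X F x a b :=
  Finset.sum_nonneg fun _ _ => by split_ifs <;> positivity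

lemma edgeEnergy_nonneg (a b : V) : 0 ≤ edgeEnergy X F a b :=
  Finset.sum_nonneg fun _ _ => by split_ifs <;> positivity

lemma edgeEnergy_comm (a b : V) : edgeEnergy X F a b = edgeEnergy X F b a := by
  unfold edgeEnergy
  simp only [swap_comm a b, ne_comm]

lemma sum_edgeEnergyAt (a b : V) : ∑ x, edgeEnergyAt X F x a b = edgeEnergy X F a b := by
  unfold edgeEnergyAt edgeEnergy tagAt
  exact Finset.sum_fiberwise X (fun ω => ω.1) _

lemma edgeEnergyAt_le (x a b : V) : edgeEnergyAt X F x a b ≤ edgeEnergy X F a b := by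
  rw [← sum_edgeEnergyAt]
  exact Finset.single_le_sum (f := fun x => edgeEnergyAt X F x a b)
    (fun y _ => edgeEnergyAt_nonneg X F y a b) (Finset.mem_univ x)

variable {X}

lemma act_swap_eq_self {ω : V × (V → Bool)} {a b : V} (ha : ω.1 ≠ a) (hb : ω.1 ≠ b)
    (hab : ω.2 a = ω.2 b) : act (swap a b) ω = ω := by
  refine Prod.ext (swap_apply_of_ne_of_ne ha hb) ?_
  funext v
  simp only [act, symm_swap, Function.comp_apply, swap_apply_def]
  split_ifs with h1 h2
  · rw [h1, hab]
  · rw [h2, hab]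
  · rfl

lemma incr_tagAt_le {x a b : V} (ha : a ≠ x) (hb : b ≠ x) :
    incr F (tagAt X x) (swap a b) ≤ √(edgeEnergyAt X F x a b) := by
  refine Real.sqrt_le_sqrt (Finset.sum_le_sum fun ω hω => ?_)
  split_ifs with h
  · exact le_rfl
  · have hx : ω.1 = x := (Finset.mem_filter.1 hω).2
    rw [act_swap_eq_self (hx ▸ ha.symm) (hx ▸ hb.symm) (not_not.1 h)]
    simp

lemma incr_tagAt_le' {x a b : V} (ha : a ≠ x) (hb : b ≠ x) :
    incr F (tagAt X x) (swap a b) ≤ √(edgeEnergy X F a b) :=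
  (incr_tagAt_le F ha hb).trans (Real.sqrt_le_sqrt (edgeEnergyAt_le X F x a b))

lemma incr_tagHole_le (hT : ∀ ω ∈ X, ω.2 ω.1 = true) (a b : V) :
    incr F (tagHole X a b) (swap a b) ≤ √(edgeEnergy X F a b) := by
  refine Real.sqrt_le_sqrt ?_
  have h1 : ∀ ω ∈ tagHole X a b, (F (act (swap a b) ω) - F ω) ^ 2 =
      if ω.2 a ≠ ω.2 b then (F (act (swap a b) ω) - F ω) ^ 2 else 0 := by
    intro ω hω
    simp only [tagHole, Finset.mem_filter] at hω
    have := hT ω hω.1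
    rw [hω.2.1] at this
    rw [if_pos (by rw [this, hω.2.2]; simp)]
  rw [Finset.sum_congr rfl h1]
  exact Finset.sum_le_sum_of_subset_of_nonneg (Finset.filter_subset _ _)
    fun _ _ _ => by split_ifs <;> positivity

lemma incr_tagAt_trans (hX : ∀ τ : Perm V, ∀ ω ∈ X, act τ ω ∈ X) {x a b c : V}
    (ha : a ≠ x) (hb : b ≠ x) (hc : c ≠ x) :
    incr F (tagAt X x) (swap a c) ≤
      incr F (tagAt X x) (swap a b) + 2 * incr F (tagAt X x) (swap b c) := by
  have n1 := incr_nonneg F (tagAt X x) (swap a b)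
  have n2 := incr_nonneg F (tagAt X x) (swap b c)
  by_cases hac : a = c
  · subst hac; rw [incr_swap_self]; linarith
  by_cases hab : a = b
  · subst hab; linarith
  have hid : swap a c = swap b c * (swap a b * swap b c) := by
    ext v; simp only [Perm.mul_apply, swap_apply_def]; grind
  have hfix : ∀ p q : V, p ≠ x → q ≠ x → ∀ ω ∈ tagAt X x, act (swap p q) ω ∈ tagAt X x :=
    fun p q hp hq => act_mem_tagAt hX (swap_apply_of_ne_of_ne hp.symm hq.symm)
  have h1 := incr_mul_le F (Y := tagAt X x) (τ₁ := swap a b * swap b c) (swap b c)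
    (fun ω hω => hfix a b ha hb _ (hfix b c hb hc ω hω))
  have h2 := incr_mul_le F (swap a b) (hfix b c hb hc)
  rw [hid]; linarith

/-- Exchanging the tagged particle at `a` with the content of `b` with the help of a hole at
`h`, which is put back in place. -/
lemma incr_tagHole_exchange_le (hX : ∀ τ : Perm V, ∀ ω ∈ X, act τ ω ∈ X) {a b h : V}
    (hab : a ≠ b) (hah : a ≠ h) (hbh : b ≠ h) :
    incr F (tagHole X a h) (swap a b) ≤ incr F (tagAt X a) (swap h b) +
      incr F (tagHole X a b) (swap a b) + incr F (tagAt X b) (swap a h) := by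
  have hid : swap a b = swap a h * (swap a b * swap h b) := by
    ext v; simp only [Perm.mul_apply, swap_apply_def]; grind
  have m1 : ∀ ω ∈ tagHole X a h, act (swap h b) ω ∈ tagHole X a b :=
    act_mem_tagHole hX (swap_apply_of_ne_of_ne hah hab) (swap_apply_left _ _)
  have m2 : ∀ ω ∈ tagHole X a b, act (swap a b) ω ∈ tagAt X b :=
    fun ω hω => act_mem_tagAt hX (swap_apply_left _ _) ω (tagHole_subset _ _ _ hω)
  have h1 := incr_mul_le F (Y := tagHole X a h) (τ₁ := swap a b * swap h b) (swap a h)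
    (fun ω hω => m2 _ (m1 ω hω))
  have h2 := incr_mul_le F (swap a b) m1
  have h3 := incr_mono F (tagHole_subset X a h) (swap h b)
  rw [← hid] at h1
  linarith

lemma incr_tagAt_path_le (hX : ∀ τ : Perm V, ∀ ω ∈ X, act τ ω ∈ X) {x : V} (p : ℕ → V) (m : ℕ)
    (hp : ∀ t ≤ m, p t ≠ x) :
    incr F (tagAt X x) (swap (p 0) (p m)) ≤
      2 * ∑ t ∈ Finset.range m, incr F (tagAt X x) (swap (p t) (p (t + 1))) := by
  induction m with
  | zero => rw [incr_swap_self]; simp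
  | succ m ih =>
    rw [Finset.sum_range_succ]
    have h1 := ih fun t ht => hp t (by omega)
    have h2 := incr_tagAt_trans F hX (hp 0 (by omega)) (hp m (by omega)) (hp (m + 1) le_rfl)
    linarith

/-- Sum of the weights of the four sides of the `t`-th square of the ladder `p`, `q`. -/
def ladderWeight (r : V → V → ℝ) (p q : ℕ → V) (t : ℕ) : ℝ :=
  r (p t) (p (t + 1)) + r (q t) (q (t + 1)) + r (p t) (q t) + r (p (t + 1)) (q (t + 1))

lemma sum_ladderWeight_bounds {r : V → V → ℝ} (hr : ∀ a b, 0 ≤ r a b) (p q : ℕ → V) {m : ℕ}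
    (hm : 0 < m) :
    ∑ t ∈ Finset.range m, r (p t) (p (t + 1)) ≤ ∑ t ∈ Finset.range m, ladderWeight r p q t ∧
    ∑ t ∈ Finset.range m, r (q t) (q (t + 1)) ≤ ∑ t ∈ Finset.range m, ladderWeight r p q t ∧
    r (p 0) (q 0) ≤ ∑ t ∈ Finset.range m, ladderWeight r p q t ∧
    r (p m) (q m) ≤ ∑ t ∈ Finset.range m, ladderWeight r p q t := by
  have h0 : ∀ t, 0 ≤ ladderWeight r p q t := fun t => by
    have := hr (p t) (p (t + 1)); have := hr (q t) (q (t + 1))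
    have := hr (p t) (q t); have := hr (p (t + 1)) (q (t + 1))
    unfold ladderWeight; linarith
  refine ⟨Finset.sum_le_sum fun t _ => ?_, Finset.sum_le_sum fun t _ => ?_, ?_, ?_⟩
  · have := hr (q t) (q (t + 1))
    have := hr (p t) (q t); have := hr (p (t + 1)) (q (t + 1))
    unfold ladderWeight; linarith
  · have := hr (p t) (p (t + 1))
    have := hr (p t) (q t); have := hr (p (t + 1)) (q (t + 1))
    unfold ladderWeight; linarith
  · refine le_trans ?_ (Finset.single_le_sum (f := ladderWeight r p q) (fun t _ => h0 t)
      (Finset.mem_range.2 hm))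
    have := hr (p 0) (p (0 + 1)); have := hr (q 0) (q (0 + 1))
    have := hr (p (0 + 1)) (q (0 + 1))
    unfold ladderWeight; linarith
  · obtain ⟨k, rfl⟩ := Nat.exists_eq_succ_of_ne_zero hm.ne'
    refine le_trans ?_ (Finset.single_le_sum (f := ladderWeight r p q) (fun t _ => h0 t)
      (Finset.mem_range.2 (Nat.lt_succ_self k)))
    have := hr (p k) (p (k + 1)); have := hr (q k) (q (k + 1))
    have := hr (p k) (q k)
    unfold ladderWeight; simp only [Nat.succ_eq_add_one]; linarith

/-- Exchange of two sites of a rail of a ladder, avoiding the tagged particle. -/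
lemma incr_tagAt_ladder_le (hX : ∀ τ : Perm V, ∀ ω ∈ X, act τ ω ∈ X) {x : V} (p q : ℕ → V)
    {m : ℕ} (hm : 0 < m) (hpq : ∀ s ≤ m, ∀ t ≤ m, p s ≠ q t) (h0 : p 0 ≠ x) (hpm : p m ≠ x) :
    incr F (tagAt X x) (swap (p 0) (p m)) ≤
      10 * ∑ t ∈ Finset.range m, ladderWeight (fun a b => √(edgeEnergyAt X F x a b)) p q t := by
  set r : V → V → ℝ := fun a b => √(edgeEnergyAt X F x a b) with hr
  obtain ⟨b1, b2, b3, b4⟩ := sum_ladderWeight_bounds (r := r) (fun _ _ => Real.sqrt_nonneg _)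
    p q hm
  have hpos : 0 ≤ r (p 0) (q 0) := Real.sqrt_nonneg _
  by_cases hx : ∀ t ≤ m, p t ≠ x
  · have h1 := incr_tagAt_path_le F hX p m hx
    have h2 : ∑ t ∈ Finset.range m, incr F (tagAt X x) (swap (p t) (p (t + 1))) ≤
        ∑ t ∈ Finset.range m, r (p t) (p (t + 1)) := Finset.sum_le_sum fun t ht =>
      incr_tagAt_le F (hx t (by have := Finset.mem_range.1 ht; omega))
        (hx (t + 1) (by have := Finset.mem_range.1 ht; omega))
    linarith
  · push Not at hx
    obtain ⟨s, hs, rfl⟩ := hx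
    have hq : ∀ t ≤ m, q t ≠ p s := fun t ht => (hpq s hs t ht).symm
    have h1 := incr_tagAt_path_le F hX q m hq
    have h2 : ∑ t ∈ Finset.range m, incr F (tagAt X (p s)) (swap (q t) (q (t + 1))) ≤
        ∑ t ∈ Finset.range m, r (q t) (q (t + 1)) := Finset.sum_le_sum fun t ht =>
      incr_tagAt_le F (hq t (by have := Finset.mem_range.1 ht; omega))
        (hq (t + 1) (by have := Finset.mem_range.1 ht; omega))
    have h3 := incr_tagAt_trans F hX h0 (hq 0 (by omega)) hpm
    have h4 := incr_tagAt_trans F hX (hq 0 (by omega)) (hq m le_rfl) hpm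
    have h5 : incr F (tagAt X (p s)) (swap (p 0) (q 0)) ≤ r (p 0) (q 0) :=
      incr_tagAt_le F h0 (hq 0 (by omega))
    have h6 : incr F (tagAt X (p s)) (swap (q m) (p m)) ≤ r (p m) (q m) := by
      rw [swap_comm]; exact incr_tagAt_le F hpm (hq m le_rfl)
    linarith

/-- Moving the tagged particle and a hole across one square of the ladder. -/
lemma incr_tagHole_square_le (hX : ∀ τ : Perm V, ∀ ω ∈ X, act τ ω ∈ X)
    (hT : ∀ ω ∈ X, ω.2 ω.1 = true) {a b c e : V} (hab : a ≠ b) (hac : a ≠ c) (hae : a ≠ e)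
    (hbc : b ≠ c) (hbe : b ≠ e) :
    incr F (tagHole X a e) (swap e c * swap a b) ≤
      2 * (√(edgeEnergy X F a b) + √(edgeEnergy X F e c) + √(edgeEnergy X F a e) +
        √(edgeEnergy X F b c)) := by
  have h1 := incr_mul_le F (Y := tagHole X a e) (τ₁ := swap a b) (swap e c)
    (fun ω hω => act_mem_tagAt hX (swap_apply_left _ _) ω (tagHole_subset _ _ _ hω))
  have h2 := incr_tagHole_exchange_le F hX hab hae hbe
  have h3 := incr_tagHole_le F hT a b
  have h4 := incr_tagAt_le' (X := X) F (x := b) hab hbe.symm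
  have h5 := incr_tagAt_le' (X := X) F (x := b) hbe.symm hbc.symm
  have h6 := incr_tagAt_trans F hX hae.symm hac.symm hab.symm
  have h7 := incr_tagAt_le' (X := X) F (x := a) hae.symm hac.symm
  have h8 := incr_tagAt_le' (X := X) F (x := a) hac.symm hab.symm
  rw [edgeEnergy_comm X F c b] at h8
  have := Real.sqrt_nonneg (edgeEnergy X F a b)
  have := Real.sqrt_nonneg (edgeEnergy X F a e)
  linarith

lemma incr_carry_le (hX : ∀ τ : Perm V, ∀ ω ∈ X, act τ ω ∈ X)
    (hT : ∀ ω ∈ X, ω.2 ω.1 = true) (p q : ℕ → V) {M : ℕ}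
    (hp : ∀ s ≤ M, ∀ t ≤ M, p s = p t → s = t) (hq : ∀ s ≤ M, ∀ t ≤ M, q s = q t → s = t)
    (hpq : ∀ s ≤ M, ∀ t ≤ M, p s ≠ q t) (m : ℕ) (hm : 1 ≤ m) (hmM : m ≤ M) :
    incr F (tagHole X (p 0) (q 0)) (swap (q 0) (q m) * swap (p 0) (p m)) ≤
      3 * ∑ t ∈ Finset.range m, ladderWeight (fun a b => √(edgeEnergy X F a b)) p q t := by
  set r : V → V → ℝ := fun a b => √(edgeEnergy X F a b) with hr
  have hr0 : ∀ a b, 0 ≤ r a b := fun _ _ => Real.sqrt_nonneg _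
  have hp' : ∀ s ≤ M, ∀ t ≤ M, s ≠ t → p s ≠ p t := fun s hs t ht h h' => h (hp s hs t ht h')
  have hq' : ∀ s ≤ M, ∀ t ≤ M, s ≠ t → q s ≠ q t := fun s hs t ht h h' => h (hq s hs t ht h')
  have hsq : ∀ t, t + 1 ≤ M → incr F (tagHole X (p t) (q t))
      (swap (q t) (q (t + 1)) * swap (p t) (p (t + 1))) ≤ 2 * ladderWeight r p q t := by
    intro t ht
    exact incr_tagHole_square_le F hX hT (hp' _ (by omega) _ ht (by omega))
      (hpq _ (by omega) _ ht) (hpq _ (by omega) _ (by omega)) (hpq _ ht _ ht)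
      (hpq _ ht _ (by omega))
  induction m, hm using Nat.le_induction with
  | base =>
    rw [Finset.sum_range_one]
    have h1 := hsq 0 hmM
    have h2 : 0 ≤ ladderWeight r p q 0 := by
      have := hr0 (p 0) (p (0 + 1)); have := hr0 (q 0) (q (0 + 1))
      have := hr0 (p 0) (q 0); have := hr0 (p (0 + 1)) (q (0 + 1))
      unfold ladderWeight; linarith
    linarith
  | succ m hm ih =>
    have ih := ih (by omega)
    rw [Finset.sum_range_succ]
    have n1 : p 0 ≠ p m := hp' _ (by omega) _ (by omega) (by omega)
    have n2 : p 0 ≠ p (m + 1) := hp' _ (by omega) _ (by omega) (by omega)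
    have n3 : p m ≠ p (m + 1) := hp' _ (by omega) _ (by omega) (by omega)
    have n4 : q 0 ≠ q m := hq' _ (by omega) _ (by omega) (by omega)
    have n5 : q 0 ≠ q (m + 1) := hq' _ (by omega) _ (by omega) (by omega)
    have n6 : q m ≠ q (m + 1) := hq' _ (by omega) _ (by omega) (by omega)
    have k1 : p 0 ≠ q 0 := hpq _ (by omega) _ (by omega)
    have k2 : p 0 ≠ q m := hpq _ (by omega) _ (by omega)
    have k3 : p 0 ≠ q (m + 1) := hpq _ (by omega) _ (by omega)
    have k4 : p m ≠ q 0 := hpq _ (by omega) _ (by omega)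
    have k5 : p m ≠ q m := hpq _ (by omega) _ (by omega)
    have k6 : p m ≠ q (m + 1) := hpq _ (by omega) _ (by omega)
    have k7 : p (m + 1) ≠ q 0 := hpq _ (by omega) _ (by omega)
    have k8 : p (m + 1) ≠ q m := hpq _ (by omega) _ (by omega)
    have k9 : p (m + 1) ≠ q (m + 1) := hpq _ (by omega) _ (by omega)
    have hlw := hsq m hmM
    have g1 : incr F (tagAt X (p 0)) (swap (p m) (p (m + 1))) ≤ r (p m) (p (m + 1)) :=
      incr_tagAt_le' F n1.symm n2.symm
    have g2 : incr F (tagAt X (p 0)) (swap (q m) (q (m + 1))) ≤ r (q m) (q (m + 1)) :=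
      incr_tagAt_le' F k2.symm k3.symm
    have g3 : r (p m) (p (m + 1)) + r (q m) (q (m + 1)) ≤ ladderWeight r p q m := by
      have := hr0 (p m) (q m); have := hr0 (p (m + 1)) (q (m + 1))
      unfold ladderWeight; linarith
    generalize p 0 = x0 at *
    generalize p m = x1 at *
    generalize p (m + 1) = x2 at *
    generalize q 0 = y0 at *
    generalize q m = y1 at *
    generalize q (m + 1) = y2 at *
    have hcomm : ∀ u v w z : V, u ≠ w → u ≠ z → v ≠ w → v ≠ z →
        swap u v * swap w z = swap w z * swap u v := by
      intro u v w z h1 h2 h3 h4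
      ext s; simp only [Perm.mul_apply, swap_apply_def]; grind
    have hconj : ∀ u v w : V, u ≠ v → u ≠ w → v ≠ w →
        swap u w = swap v w * (swap u v * swap v w) := by
      intro u v w h1 h2 h3
      ext s; simp only [Perm.mul_apply, swap_apply_def]; grind
    have hid : swap y0 y2 * swap x0 x2 = (swap y1 y2 * swap x1 x2) *
        ((swap y0 y1 * swap x0 x1) * (swap y1 y2 * swap x1 x2)) := by
      rw [hconj y0 y1 y2 n4 n5 n6, hconj x0 x1 x2 n1 n2 n3]
      have c1 := hcomm y1 y2 x1 x2 k5.symm k8.symm k6.symm k9.symm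
      have c2 := hcomm y0 y1 x1 x2 k4.symm k7.symm k5.symm k8.symm
      have c3 := hcomm y1 y2 x0 x1 k2.symm k5.symm k3.symm k6.symm
      simp only [mul_assoc]
      rw [← mul_assoc (swap x1 x2) (swap y0 y1), ← c2]
      simp only [mul_assoc]
      rw [← mul_assoc (swap x0 x1) (swap y1 y2), ← c3]
      simp only [mul_assoc]
      rw [← mul_assoc (swap x1 x2) (swap y1 y2), ← c1]
      simp only [mul_assoc]
    rw [hid]
    have m1 : ∀ ω ∈ tagHole X x0 y0, act (swap x1 x2) ω ∈ tagHole X x0 y0 :=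
      act_mem_tagHole hX (swap_apply_of_ne_of_ne n1 n2) (swap_apply_of_ne_of_ne k4.symm k7.symm)
    have m2 : ∀ ω ∈ tagHole X x0 y0, act (swap y1 y2) ω ∈ tagHole X x0 y0 :=
      act_mem_tagHole hX (swap_apply_of_ne_of_ne k2 k3) (swap_apply_of_ne_of_ne n4 n5)
    have m3 : ∀ ω ∈ tagHole X x0 y0, act (swap y0 y1 * swap x0 x1) ω ∈ tagHole X x1 y1 := by
      refine act_mem_tagHole hX ?_ ?_
      · rw [Perm.mul_apply, swap_apply_left, swap_apply_of_ne_of_ne k4 k5]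
      · rw [Perm.mul_apply, swap_apply_of_ne_of_ne k1.symm k4.symm, swap_apply_left]
    have i1 := incr_mul_le F (Y := tagHole X x0 y0)
      (τ₁ := (swap y0 y1 * swap x0 x1) * (swap y1 y2 * swap x1 x2)) (swap y1 y2 * swap x1 x2)
      (fun ω hω => m3 _ (m2 _ (m1 ω hω)))
    have i2 := incr_mul_le F (Y := tagHole X x0 y0)
      (τ₁ := swap y1 y2 * swap x1 x2) (swap y0 y1 * swap x0 x1)
      (fun ω hω => m2 _ (m1 ω hω))
    have i3 := incr_mul_le F (swap y1 y2) m1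
    have i4 := incr_mono F (tagHole_subset X x0 y0) (swap x1 x2)
    have i5 := incr_mono F (tagHole_subset X x0 y0) (swap y1 y2)
    linarith

/-- Exchange of the tagged particle with a hole along a rail of a ladder. -/
lemma incr_tagHole_ladder_le (hX : ∀ τ : Perm V, ∀ ω ∈ X, act τ ω ∈ X)
    (hT : ∀ ω ∈ X, ω.2 ω.1 = true) (p q : ℕ → V) {m : ℕ} (hm : 0 < m)
    (hp : ∀ s ≤ m, ∀ t ≤ m, p s = p t → s = t) (hq : ∀ s ≤ m, ∀ t ≤ m, q s = q t → s = t)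
    (hpq : ∀ s ≤ m, ∀ t ≤ m, p s ≠ q t) :
    incr F (tagHole X (p 0) (p m)) (swap (p 0) (p m)) ≤
      10 * ∑ t ∈ Finset.range m, ladderWeight (fun a b => √(edgeEnergy X F a b)) p q t := by
  set r : V → V → ℝ := fun a b => √(edgeEnergy X F a b) with hr
  obtain ⟨b1, b2, b3, b4⟩ := sum_ladderWeight_bounds (r := r) (fun _ _ => Real.sqrt_nonneg _)
    p q hm
  have hcarry := incr_carry_le F hX hT p q hp hq hpq m hm le_rfl
  have n1 : p 0 ≠ p m := fun h => by have := hp 0 (by omega) m le_rfl h; omega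
  have k1 : p 0 ≠ q 0 := hpq _ (by omega) _ (by omega)
  have k2 : p 0 ≠ q m := hpq _ (by omega) _ (by omega)
  have k3 : p m ≠ q 0 := hpq _ (by omega) _ (by omega)
  have k4 : p m ≠ q m := hpq _ (by omega) _ (by omega)
  have hpath : ∀ x, (∀ t ≤ m, q t ≠ x) → incr F (tagAt X x) (swap (q 0) (q m)) ≤
      2 * ∑ t ∈ Finset.range m, r (q t) (q (t + 1)) := by
    intro x hx
    refine (incr_tagAt_path_le F hX q m hx).trans ?_
    gcongr with t ht
    exact incr_tagAt_le' F (hx t (by have := Finset.mem_range.1 ht; omega))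
        (hx (t + 1) (by have := Finset.mem_range.1 ht; omega))
  have h1 := hpath (p 0) fun t ht => (hpq 0 (by omega) t ht).symm
  have h2 := hpath (p m) fun t ht => (hpq m le_rfl t ht).symm
  have h3 := incr_tagAt_trans F hX k1.symm k2.symm n1.symm
  have h4 : incr F (tagAt X (p 0)) (swap (q m) (p m)) ≤ r (p m) (q m) := by
    rw [swap_comm]; exact incr_tagAt_le' F n1.symm k2.symm
  have h5 : incr F (tagAt X (p m)) (swap (p 0) (q 0)) ≤ r (p 0) (q 0) :=
    incr_tagAt_le' F n1 k3.symm
  have hid : swap (p 0) (p m) =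
      swap (p 0) (q 0) * (swap (p 0) (p m) * swap (q 0) (p m)) := by
    ext v; simp only [Perm.mul_apply, swap_apply_def]; grind
  have hid' : swap (p 0) (p m) =
      swap (q 0) (q m) * (swap (q 0) (q m) * swap (p 0) (p m)) := by
    rw [← mul_assoc, swap_mul_self, one_mul]
  have m1 : ∀ ω ∈ tagHole X (p 0) (p m), act (swap (q 0) (p m)) ω ∈ tagHole X (p 0) (q 0) :=
    act_mem_tagHole hX (swap_apply_of_ne_of_ne k1 n1) (swap_apply_right _ _)
  have m2 : ∀ ω ∈ tagHole X (p 0) (q 0), act (swap (p 0) (p m)) ω ∈ tagAt X (p m) :=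
    fun ω hω => act_mem_tagAt hX (swap_apply_left _ _) ω (tagHole_subset _ _ _ hω)
  have m3 : ∀ ω ∈ tagHole X (p 0) (q 0),
      act (swap (q 0) (q m) * swap (p 0) (p m)) ω ∈ tagAt X (p m) :=
    fun ω hω => act_mem_tagAt hX (swap_apply_of_ne_of_ne k3 k4) _ (m2 ω hω)
  have i1 := incr_mul_le F (Y := tagHole X (p 0) (p m))
    (τ₁ := swap (p 0) (p m) * swap (q 0) (p m)) (swap (p 0) (q 0)) (fun ω hω => m2 _ (m1 ω hω))
  have i2 := incr_mul_le F (swap (p 0) (p m)) m1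
  have i3 := incr_mono F (tagHole_subset X (p 0) (p m)) (swap (q 0) (p m))
  have i4 := incr_mul_le F (swap (q 0) (q m)) m3
  rw [← hid] at i1
  rw [← hid'] at i4
  linarith

end ladder

section assembly

variable (X : Finset (V × (V → Bool))) (F : V × (V → Bool) → ℝ)

/-- Squared increment for the exchange of two sites away from the tagged particle at `x`. -/
def bulkIncr (x a b : V) : ℝ := if a ≠ x ∧ b ≠ x then incr F (tagAt X x) (swap a b) ^ 2 else 0

/-- Squared increment for the exchange of the tagged particle with a hole. -/
def tagIncr (a b : V) : ℝ := incr F (tagHole X a b) (swap a b) ^ 2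

lemma bulkIncr_nonneg (x a b : V) : 0 ≤ bulkIncr X F x a b := by
  unfold bulkIncr; split_ifs <;> positivity

lemma tagIncr_nonneg (a b : V) : 0 ≤ tagIncr X F a b := sq_nonneg _

variable {X}

lemma exchangeForm_eq_sum_incr (u w : V) :
    exchangeForm X F u w = ∑ x, incr F (tagAt X x) (swap u w) ^ 2 := by
  simp only [incr_sq, exchangeForm, tagAt]
  exact (Finset.sum_fiberwise X (fun ω => ω.1) _).symm

lemma sum_incr_tagHole {K : ℕ}
    (hK : ∀ ω ∈ X, (Finset.univ.filter fun v => ω.2 v = false).card = K) (x : V) (τ : Perm V) :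
    ∑ h, incr F (tagHole X x h) τ ^ 2 = K * incr F (tagAt X x) τ ^ 2 := by
  simp only [incr_sq, tagHole, tagAt, Finset.mul_sum, Finset.sum_filter]
  rw [Finset.sum_comm]
  refine Finset.sum_congr rfl fun ω hω => ?_
  by_cases hx : ω.1 = x
  · simp only [hx, true_and, if_true]
    rw [← Finset.sum_filter, Finset.sum_const, hK ω hω, nsmul_eq_mul]
  · simp [hx]

lemma incr_tagHole_sq_le (hX : ∀ τ : Perm V, ∀ ω ∈ X, act τ ω ∈ X)
    (hT : ∀ ω ∈ X, ω.2 ω.1 = true) (x w h : V) :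
    incr F (tagHole X x h) (swap x w) ^ 2 ≤ (if h = w then tagIncr X F x w else 0) +
      3 * (bulkIncr X F x h w + tagIncr X F x w + bulkIncr X F w x h) := by
  have n1 := bulkIncr_nonneg X F x h w
  have n2 := bulkIncr_nonneg X F w x h
  have n3 := tagIncr_nonneg X F x w
  by_cases hhw : h = w
  · subst hhw
    rw [if_pos rfl]
    have : incr F (tagHole X x h) (swap x h) ^ 2 = tagIncr X F x h := rfl
    linarith
  rw [if_neg hhw]
  by_cases hxw : x = w
  · subst hxw
    rw [incr_swap_self]; nlinarith
  by_cases hxh : x = h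
  · subst hxh
    have : tagHole X x x = ∅ := by
      rw [tagHole, Finset.filter_eq_empty_iff]
      rintro ω hω ⟨rfl, h2⟩
      rw [hT ω hω] at h2
      exact absurd h2 (by simp)
    have h0 : incr F (tagHole X x x) (swap x w) ^ 2 = 0 := by
      rw [incr_sq, this, Finset.sum_empty]
    linarith
  have h1 := incr_tagHole_exchange_le F hX hxw hxh (Ne.symm hhw)
  have e1 : bulkIncr X F x h w = incr F (tagAt X x) (swap h w) ^ 2 :=
    if_pos ⟨Ne.symm hxh, Ne.symm hxw⟩
  have e2 : bulkIncr X F w x h = incr F (tagAt X w) (swap x h) ^ 2 := if_pos ⟨hxw, hhw⟩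
  have e3 : tagIncr X F x w = incr F (tagHole X x w) (swap x w) ^ 2 := rfl
  rw [e1, e2, e3, zero_add]
  have m0 := incr_nonneg F (tagHole X x h) (swap x w)
  generalize incr F (tagHole X x h) (swap x w) = q0 at *
  generalize incr F (tagAt X x) (swap h w) = q1 at *
  generalize incr F (tagHole X x w) (swap x w) = q2 at *
  generalize incr F (tagAt X w) (swap x h) = q3 at *
  calc q0 ^ 2 ≤ (q1 + q2 + q3) ^ 2 := by gcongr
    _ ≤ 3 * (q1 ^ 2 + q2 ^ 2 + q3 ^ 2) := by
      nlinarith [sq_nonneg (q1 - q2), sq_nonneg (q1 - q3), sq_nonneg (q2 - q3)]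

lemma card_mul_sum_exchangeForm_le (hX : ∀ τ : Perm V, ∀ ω ∈ X, act τ ω ∈ X)
    (hT : ∀ ω ∈ X, ω.2 ω.1 = true) {K : ℕ}
    (hK : ∀ ω ∈ X, (Finset.univ.filter fun v => ω.2 v = false).card = K) :
    (K : ℝ) * ∑ u, ∑ w, exchangeForm X F u w ≤
      (K + 12) * ∑ x, ∑ a, ∑ b, bulkIncr X F x a b +
        (6 * Fintype.card V + 2) * ∑ a, ∑ b, tagIncr X F a b := by
  set A := ∑ x, ∑ a, ∑ b, bulkIncr X F x a b with hA
  set B := ∑ a, ∑ b, tagIncr X F a b with hB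
  set S := ∑ x, ∑ w, incr F (tagAt X x) (swap x w) ^ 2 with hS
  have hKS : (K : ℝ) * S ≤ 6 * A + (3 * Fintype.card V + 1) * B := by
    have e1 : (K : ℝ) * S = ∑ x, ∑ w, ∑ h, incr F (tagHole X x h) (swap x w) ^ 2 := by
      simp only [hS, Finset.mul_sum, sum_incr_tagHole F hK]
    have e2 : ∑ x, ∑ w, ∑ h, bulkIncr X F x h w = A :=
      Finset.sum_congr rfl fun x _ => Finset.sum_comm
    have e3 : ∑ x, ∑ w, ∑ h, bulkIncr X F w x h = A := Finset.sum_comm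
    rw [e1]
    calc ∑ x, ∑ w, ∑ h, incr F (tagHole X x h) (swap x w) ^ 2
        ≤ ∑ x, ∑ w, ∑ h, ((if h = w then tagIncr X F x w else 0) +
          3 * (bulkIncr X F x h w + tagIncr X F x w + bulkIncr X F w x h)) :=
          Finset.sum_le_sum fun x _ => Finset.sum_le_sum fun w _ => Finset.sum_le_sum fun h _ =>
            incr_tagHole_sq_le F hX hT x w h
      _ = B + 3 * (A + Fintype.card V * B + A) := by
          simp only [Finset.sum_add_distrib, ← Finset.mul_sum, e2, e3]
          simp only [Finset.sum_ite_eq', Finset.mem_univ, if_true, Finset.sum_const,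
            Finset.card_univ, nsmul_eq_mul, ← Finset.mul_sum, ← hB]
      _ = _ := by ring
  have hsplit : ∑ u, ∑ w, exchangeForm X F u w ≤ A + 2 * S := by
    have e1 : ∑ u, ∑ w, exchangeForm X F u w =
        ∑ x, ∑ u, ∑ w, incr F (tagAt X x) (swap u w) ^ 2 := by
      simp only [exchangeForm_eq_sum_incr]
      rw [Finset.sum_congr rfl fun u _ => Finset.sum_comm, Finset.sum_comm]
    have e2 : ∀ x u w, incr F (tagAt X x) (swap u w) ^ 2 ≤ bulkIncr X F x u w +
        ((if u = x then incr F (tagAt X x) (swap x w) ^ 2 else 0) +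
        (if w = x then incr F (tagAt X x) (swap x u) ^ 2 else 0)) := by
      intro x u w
      have := sq_nonneg (incr F (tagAt X x) (swap x u))
      have := sq_nonneg (incr F (tagAt X x) (swap x w))
      by_cases hu : u = x
      · subst hu
        have := bulkIncr_nonneg X F u u w
        rw [if_pos rfl]
        split_ifs <;> linarith
      · by_cases hw : w = x
        · subst hw
          have := bulkIncr_nonneg X F w u w
          rw [swap_comm u w, if_neg hu, if_pos rfl]
          linarith
        · rw [bulkIncr, if_pos ⟨hu, hw⟩, if_neg hw]
          rw [if_neg hu]
          linarith
    rw [e1]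
    calc _ ≤ ∑ x, ∑ u, ∑ w, (bulkIncr X F x u w +
        ((if u = x then incr F (tagAt X x) (swap x w) ^ 2 else 0) +
        (if w = x then incr F (tagAt X x) (swap x u) ^ 2 else 0))) :=
          Finset.sum_le_sum fun x _ => Finset.sum_le_sum fun w _ => Finset.sum_le_sum fun h _ =>
            e2 _ _ _
      _ = A + (S + S) := by
          simp only [Finset.sum_add_distrib]
          congr 2
          · refine Finset.sum_congr rfl fun x _ => ?_
            rw [Finset.sum_comm]
            simp
          · simp [hS]
      _ = _ := by ring
  have hK0 : (0 : ℝ) ≤ K := Nat.cast_nonneg K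
  nlinarith [mul_le_mul_of_nonneg_left hsplit hK0]

end assembly
section grid

variable {d L : ℕ}

/-- Nearest neighbours in the grid `{0, …, L - 1}^d`. -/
def GridAdj (v w : Fin d → Fin L) : Prop :=
  ∃ i, (∀ j, j ≠ i → v j = w j) ∧ ((v i : ℕ) + 1 = w i ∨ (w i : ℕ) + 1 = v i)

open scoped Classical in
/-- Sum of the weights of the edges at the vertex `v`. -/
def nodeWeight (e : (Fin d → Fin L) → (Fin d → Fin L) → ℝ) (v : Fin d → Fin L) : ℝ :=
  ∑ z, if GridAdj v z then e v z else 0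

/-- Sum of the weights of all edges, each of them counted with both orientations. -/
def totalWeight (e : (Fin d → Fin L) → (Fin d → Fin L) → ℝ) : ℝ := ∑ v, nodeWeight e v

lemma nodeWeight_nonneg {e : (Fin d → Fin L) → (Fin d → Fin L) → ℝ} (he : ∀ a b, 0 ≤ e a b)
    (v : Fin d → Fin L) : 0 ≤ nodeWeight e v :=
  Finset.sum_nonneg fun z _ => by split_ifs <;> simp [he]

lemma totalWeight_nonneg {e : (Fin d → Fin L) → (Fin d → Fin L) → ℝ} (he : ∀ a b, 0 ≤ e a b) :
    0 ≤ totalWeight e := Finset.sum_nonneg fun v _ => nodeWeight_nonneg he v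

open scoped Classical in
lemma le_nodeWeight {e : (Fin d → Fin L) → (Fin d → Fin L) → ℝ} (he : ∀ a b, 0 ≤ e a b)
    {v z : Fin d → Fin L} (h : GridAdj v z) : e v z ≤ nodeWeight e v := by
  refine (if_pos h).symm.le.trans (Finset.single_le_sum
    (f := fun z => if GridAdj v z then e v z else 0) (fun z _ => ?_) (Finset.mem_univ z))
  split_ifs <;> simp [he]

variable [NeZero L]

/-- The coordinate of the neighbouring line used as the second rail of a ladder. -/
def mateCoord (c : Fin L) : Fin L := if (c : ℕ) + 1 < L then c + 1 else c - 1

lemma val_add_one_of_lt {c : Fin L} (h : (c : ℕ) + 1 < L) : ((c + 1 : Fin L) : ℕ) = c + 1 := by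
  have : 1 < L := by omega
  rw [Fin.val_add, Fin.val_one', Nat.mod_eq_of_lt this, Nat.mod_eq_of_lt h]

lemma mateCoord_spec (hL : 2 ≤ L) (c : Fin L) :
    (c : ℕ) + 1 = mateCoord c ∨ (mateCoord c : ℕ) + 1 = c := by
  unfold mateCoord
  split_ifs with h
  · exact Or.inl (val_add_one_of_lt h).symm
  · right
    have hc := c.isLt
    have h1 : ((c - 1 : Fin L) : ℕ) + 1 = c := by
      rw [Fin.val_sub, Fin.val_one', Nat.mod_eq_of_lt (by omega : 1 < L)]
      have : L - 1 + (c : ℕ) = (L - 2) + L := by omega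
      rw [this, Nat.add_mod_right, Nat.mod_eq_of_lt (by omega)]
      omega
    exact h1

/-- The neighbour of `v` in direction `j` lying on the second rail of a ladder. -/
def mate (j : Fin d) (v : Fin d → Fin L) : Fin d → Fin L :=
  Function.update v j (mateCoord (v j))

lemma gridAdj_mate (hL : 2 ≤ L) (j : Fin d) (v : Fin d → Fin L) : GridAdj v (mate j v) := by
  refine ⟨j, fun k hk => by simp [mate, hk], ?_⟩
  simpa [mate] using mateCoord_spec hL (v j)

lemma mate_update {i j : Fin d} (hij : i ≠ j) (v : Fin d → Fin L) (c : Fin L) :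
    mate j (Function.update v i c) = Function.update (mate j v) i c := by
  unfold mate
  rw [Function.update_of_ne hij.symm, Function.update_comm hij.symm]

lemma gridAdj_update (v : Fin d → Fin L) (i : Fin d) {c c' : Fin L} (h : (c : ℕ) + 1 = c') :
    GridAdj (Function.update v i c) (Function.update v i c') :=
  ⟨i, fun j hj => by simp [hj], by simp [h]⟩

/-- Sum of the node weights over the two rails of a ladder in direction `i`. -/
def railWeight (e : (Fin d → Fin L) → (Fin d → Fin L) → ℝ) (i j : Fin d)
    (v : Fin d → Fin L) : ℝ :=
  ∑ c, nodeWeight e (Function.update v i c) +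
    ∑ c, nodeWeight e (Function.update (mate j v) i c)

lemma sum_range_shift_le {g : Fin L → ℝ} (hg : ∀ c, 0 ≤ g c) (a m : ℕ) (h : a + m ≤ L) :
    ∑ t ∈ Finset.range m, g (Fin.ofNat L (a + t)) ≤ ∑ c, g c := by
  rw [← Finset.sum_image (f := g) (s := Finset.range m) (g := fun t => Fin.ofNat L (a + t))]
  · exact Finset.sum_le_sum_of_subset_of_nonneg (Finset.subset_univ _) fun c _ _ => hg c
  · intro s hs t ht hst
    simp only [Finset.coe_range, Set.mem_Iio] at hs ht
    have := congrArg Fin.val hst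
    simp only [Fin.val_ofNat] at this
    rw [Nat.mod_eq_of_lt (by omega), Nat.mod_eq_of_lt (by omega)] at this
    omega

lemma sum_update_le {g : (Fin d → Fin L) → ℝ} (hg : ∀ v, 0 ≤ g v) (v : Fin d → Fin L)
    (i : Fin d) : ∑ c, g (Function.update v i c) ≤ ∑ w, g w := by
  rw [← Finset.sum_image (f := g) (g := fun c => Function.update v i c)
    (fun a _ b _ hab => Function.update_injective v i hab)]
  exact Finset.sum_le_sum_of_subset_of_nonneg (Finset.subset_univ _) fun c _ _ => hg c

lemma sum_sum_update (g : (Fin d → Fin L) → ℝ) (i : Fin d) :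
    ∑ v : Fin d → Fin L, ∑ c, g (Function.update v i c) = L * ∑ v, g v := by
  have : ∑ v : Fin d → Fin L, ∑ c, g (Function.update v i c) =
      ∑ v : Fin d → Fin L, ∑ _c : Fin L, g v := by
    rw [← Finset.sum_product', ← Finset.sum_product']
    refine Finset.sum_nbij' (fun p => (Function.update p.1 i p.2, p.1 i))
      (fun p => (Function.update p.1 i p.2, p.1 i)) ?_ ?_ ?_ ?_ ?_ <;> simp
  rw [this]
  simp [Finset.mul_sum]

lemma sum_mate_le {g : (Fin d → Fin L) → ℝ} (hg : ∀ v, 0 ≤ g v) (j : Fin d) :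
    ∑ v, g (mate j v) ≤ 2 * ∑ v, g v := by
  have hshift : ∀ s : Fin L, ∑ v : Fin d → Fin L, g (Function.update v j (v j + s)) =
      ∑ v, g v := by
    intro s
    refine Finset.sum_nbij' (fun v => Function.update v j (v j + s))
      (fun v => Function.update v j (v j - s)) ?_ ?_ ?_ ?_ ?_ <;> simp
  calc ∑ v, g (mate j v) ≤ ∑ v : Fin d → Fin L, (g (Function.update v j (v j + 1)) +
        g (Function.update v j (v j + -1))) := by
        refine Finset.sum_le_sum fun v _ => ?_
        have h1 := hg (Function.update v j (v j + 1))
        have h2 := hg (Function.update v j (v j + -1))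
        unfold mate mateCoord
        split_ifs
        · linarith
        · rw [sub_eq_add_neg]; linarith
    _ = 2 * ∑ v, g v := by
        rw [Finset.sum_add_distrib, hshift, hshift]; ring

variable {e : (Fin d → Fin L) → (Fin d → Fin L) → ℝ}

lemma railWeight_nonneg (he : ∀ a b, 0 ≤ e a b) (i j : Fin d) (v : Fin d → Fin L) :
    0 ≤ railWeight e i j v :=
  add_nonneg (Finset.sum_nonneg fun _ _ => nodeWeight_nonneg he _)
    (Finset.sum_nonneg fun _ _ => nodeWeight_nonneg he _)

lemma railWeight_le (he : ∀ a b, 0 ≤ e a b) (i j : Fin d) (v : Fin d → Fin L) :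
    railWeight e i j v ≤ 2 * totalWeight e := by
  have h1 := sum_update_le (nodeWeight_nonneg he) v i
  have h2 := sum_update_le (nodeWeight_nonneg he) (mate j v) i
  unfold railWeight totalWeight
  linarith

lemma sum_railWeight_le (he : ∀ a b, 0 ≤ e a b) {i j : Fin d} (hij : i ≠ j) :
    ∑ v, railWeight e i j v ≤ 3 * L * totalWeight e := by
  unfold railWeight
  rw [Finset.sum_add_distrib, sum_sum_update]
  simp only [← mate_update hij]
  rw [sum_sum_update (fun v => nodeWeight e (mate j v))]
  have := mul_le_mul_of_nonneg_left (sum_mate_le (nodeWeight_nonneg he) j)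
    (Nat.cast_nonneg (α := ℝ) L)
  unfold totalWeight
  linarith

/-- A rail of the ladder through `v` in direction `i`. -/
def rail (v : Fin d → Fin L) (i : Fin d) (a t : ℕ) : Fin d → Fin L :=
  Function.update v i (Fin.ofNat L (a + t))

lemma rail_inj (v : Fin d → Fin L) (i : Fin d) {a m : ℕ} (h : a + m < L) :
    ∀ s ≤ m, ∀ t ≤ m, rail v i a s = rail v i a t → s = t := by
  intro s hs t ht hst
  have := congrArg Fin.val (Function.update_injective v i hst)
  simp only [Fin.val_ofNat] at this
  rw [Nat.mod_eq_of_lt (by omega), Nat.mod_eq_of_lt (by omega)] at this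
  omega

lemma rail_ne (hL : 2 ≤ L) (v : Fin d → Fin L) {i j : Fin d} (hij : i ≠ j) (a s t : ℕ) :
    rail v i a s ≠ rail (mate j v) i a t := by
  intro h
  have h1 := congrFun h j
  have h2 := mateCoord_spec hL (v j)
  simp only [rail, mate, Function.update_of_ne hij.symm, Function.update_self] at h1
  rw [← h1] at h2
  omega

lemma sum_ladderWeight_sq_le (hL : 2 ≤ L) (he : ∀ a b, 0 ≤ e a b) {i j : Fin d} (hij : i ≠ j)
    (v : Fin d → Fin L) {a m : ℕ} (h : a + m < L) :
    (∑ t ∈ Finset.range m, ladderWeight (fun x y => √(e x y)) (rail v i a)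
      (rail (mate j v) i a) t) ^ 2 ≤ 12 * L * railWeight e i j v := by
  have hn := nodeWeight_nonneg he
  have hstep : ∀ u : Fin d → Fin L, ∀ t < m, GridAdj (rail u i a t) (rail u i a (t + 1)) := by
    intro u t ht
    refine gridAdj_update u i ?_
    simp only [Fin.val_ofNat]
    rw [Nat.mod_eq_of_lt (by omega), Nat.mod_eq_of_lt (by omega)]
    omega
  have hrung : ∀ t, GridAdj (rail v i a t) (rail (mate j v) i a t) := by
    intro t
    have := gridAdj_mate hL j (rail v i a t)
    rwa [rail, mate_update hij] at this
  have hterm : ∀ t ∈ Finset.range m, ladderWeight (fun x y => √(e x y)) (rail v i a)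
      (rail (mate j v) i a) t ^ 2 ≤ 4 * (2 * nodeWeight e (rail v i a t) +
        nodeWeight e (rail (mate j v) i a t) + nodeWeight e (rail v i (a + 1) t)) := by
    intro t ht
    have ht := Finset.mem_range.1 ht
    have hshift : rail v i (a + 1) t = rail v i a (t + 1) := by
      unfold rail; rw [show a + 1 + t = a + (t + 1) by ring]
    have g1 := le_nodeWeight he (hstep v t ht)
    have g2 := le_nodeWeight he (hstep (mate j v) t ht)
    have g3 := le_nodeWeight he (hrung t)
    have g4 := le_nodeWeight he (hrung (t + 1))
    rw [hshift]
    rw [← Real.sq_sqrt (he _ _)] at g1 g2 g3 g4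
    unfold ladderWeight
    dsimp only
    generalize √(e (rail v i a t) (rail v i a (t + 1))) = r1 at *
    generalize √(e (rail (mate j v) i a t) (rail (mate j v) i a (t + 1))) = r2 at *
    generalize √(e (rail v i a t) (rail (mate j v) i a t)) = r3 at *
    generalize √(e (rail v i a (t + 1)) (rail (mate j v) i a (t + 1))) = r4 at *
    have : (r1 + r2 + r3 + r4) ^ 2 ≤ 4 * (r1 ^ 2 + r2 ^ 2 + r3 ^ 2 + r4 ^ 2) := by
      nlinarith [sq_nonneg (r1 - r2), sq_nonneg (r1 - r3), sq_nonneg (r1 - r4),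
        sq_nonneg (r2 - r3), sq_nonneg (r2 - r4), sq_nonneg (r3 - r4)]
    linarith
  have s1 := sum_range_shift_le (g := fun c => nodeWeight e (Function.update v i c))
    (fun c => hn _) a m (by omega)
  have s2 := sum_range_shift_le (g := fun c => nodeWeight e (Function.update (mate j v) i c))
    (fun c => hn _) a m (by omega)
  have s3 := sum_range_shift_le (g := fun c => nodeWeight e (Function.update v i c))
    (fun c => hn _) (a + 1) m (by omega)
  have hsum := Finset.sum_le_sum hterm
  rw [← Finset.mul_sum, Finset.sum_add_distrib, Finset.sum_add_distrib, ← Finset.mul_sum]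
    at hsum
  have hq : 0 ≤ ∑ c, nodeWeight e (Function.update (mate j v) i c) :=
    Finset.sum_nonneg fun _ _ => hn _
  have hbound : ∑ t ∈ Finset.range m, ladderWeight (fun x y => √(e x y)) (rail v i a)
      (rail (mate j v) i a) t ^ 2 ≤ 12 * railWeight e i j v := by
    unfold railWeight
    unfold rail at hsum ⊢
    linarith
  have hcs := sq_sum_le_card_mul_sum_sq (s := Finset.range m)
    (f := fun t => ladderWeight (fun x y => √(e x y)) (rail v i a) (rail (mate j v) i a) t)
  rw [Finset.card_range] at hcs
  have hm : (m : ℝ) ≤ L := by exact_mod_cast (by omega : m ≤ L)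
  calc _ ≤ _ := hcs
    _ ≤ L * (12 * railWeight e i j v) := by
      gcongr
    _ = _ := by ring

end grid
section routes

variable {d L : ℕ}

/-- The path from `u` to `w` which changes the coordinates one after the other. -/
def route (u w : Fin d → Fin L) (k : ℕ) : Fin d → Fin L :=
  fun j => if (j : ℕ) < k then w j else u j

lemma route_zero (u w : Fin d → Fin L) : route u w 0 = u := by
  funext j; simp [route]

lemma route_last (u w : Fin d → Fin L) : route u w d = w := by
  funext j; simp [route]

lemma route_succ (u w : Fin d → Fin L) (k : Fin d) :
    route u w ((k : ℕ) + 1) = Function.update (route u w k) k (w k) := by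
  funext j
  by_cases hj : j = k
  · subst hj; simp [route]
  · rw [Function.update_of_ne hj]
    have : (j : ℕ) ≠ k := fun h => hj (Fin.ext h)
    have h2 : (j : ℕ) < (k : ℕ) + 1 ↔ (j : ℕ) < k := by omega
    simp only [route, h2]

lemma sum_route (h : (Fin d → Fin L) → ℝ) (k : ℕ) :
    ∑ u, ∑ w, h (route u w k) = Fintype.card (Fin d → Fin L) * ∑ v, h v := by
  have : ∑ u, ∑ w, h (route u w k) = ∑ u, ∑ _w : Fin d → Fin L, h u := by
    rw [← Finset.sum_product', ← Finset.sum_product']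
    refine Finset.sum_nbij' (fun p => (route p.1 p.2 k, route p.2 p.1 k))
      (fun p => (route p.1 p.2 k, route p.2 p.1 k)) ?_ ?_ ?_ ?_ ?_
    · simp
    · simp
    · rintro ⟨u, w⟩ -
      refine Prod.ext ?_ ?_ <;> funext j <;> simp only [route] <;> split_ifs <;> rfl
    · rintro ⟨u, w⟩ -
      refine Prod.ext ?_ ?_ <;> funext j <;> simp only [route] <;> split_ifs <;> rfl
    · simp
  rw [this]
  simp only [Finset.sum_const, Finset.card_univ, nsmul_eq_mul, ← Finset.mul_sum]

lemma route_avoids {x u w : Fin d → Fin L} (hu : u ≠ x) (hw : w ≠ x) :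
    (∀ k, route u w k ≠ x) ∨ ∀ k, route w u k ≠ x := by
  by_contra! h
  obtain ⟨⟨k, hk⟩, m, hm⟩ := h
  rcases le_total k m with hkm | hkm
  · refine hu (funext fun j => ?_)
    have h1 := congrFun hk j
    have h2 := congrFun hm j
    simp only [route] at h1 h2
    split_ifs at h1 h2
    · exact h2
    · omega
    · exact h1
    · exact h1
  · refine hw (funext fun j => ?_)
    have h1 := congrFun hk j
    have h2 := congrFun hm j
    simp only [route] at h1 h2
    split_ifs at h1 h2
    · exact h1
    · exact h1
    · omega
    · exact h2

end routes

section quasiTriangle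

variable {X : Finset (V × (V → Bool))} (F : V × (V → Bool) → ℝ)

lemma tagIncr_comm (hX : ∀ τ : Perm V, ∀ ω ∈ X, act τ ω ∈ X) (a b : V) :
    tagIncr X F a b = tagIncr X F b a := by
  have hinv : ∀ ω : V × (V → Bool), act (swap a b) (act (swap a b) ω) = ω := fun ω => by
    rw [← act_mul, swap_mul_self, act_one]
  unfold tagIncr
  rw [incr_sq, incr_sq, swap_comm b a]
  refine Finset.sum_nbij' (act (swap a b)) (act (swap a b))
    (act_mem_tagHole hX (swap_apply_left _ _) (swap_apply_right _ _))
    (act_mem_tagHole hX (swap_apply_right _ _) (swap_apply_left _ _))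
    (fun ω _ => hinv ω) (fun ω _ => hinv ω) (fun ω _ => ?_)
  rw [hinv]
  ring

lemma incr_tagHole_trans (hX : ∀ τ : Perm V, ∀ ω ∈ X, act τ ω ∈ X) {s : V → ℝ}
    (hs : ∀ x, 0 ≤ s x)
    (hbulk : ∀ x a b, a ≠ x → b ≠ x → incr F (tagAt X x) (swap a b) ≤ s x) (u w z : V) :
    incr F (tagHole X u w) (swap u w) ≤ incr F (tagHole X u z) (swap u z) +
      incr F (tagHole X z w) (swap z w) + (s u + s z + s w) := by
  have n1 := incr_nonneg F (tagHole X u z) (swap u z)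
  have n2 := incr_nonneg F (tagHole X z w) (swap z w)
  have n3 := hs u
  have n4 := hs w
  have n5 := hs z
  by_cases huw : u = w
  · subst huw; rw [incr_swap_self]; linarith
  by_cases huz : u = z
  · subst huz; linarith
  by_cases hwz : w = z
  · subst hwz; linarith
  have hid : swap u w = swap u z * (swap z w * (swap u w * (swap u z * swap w z))) := by
    ext v; simp only [Perm.mul_apply, swap_apply_def]; grind
  have m1 : ∀ ω ∈ tagHole X u w, act (swap w z) ω ∈ tagHole X u z :=
    act_mem_tagHole hX (swap_apply_of_ne_of_ne huw huz) (swap_apply_left _ _)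
  have m2 : ∀ ω ∈ tagHole X u z, act (swap u z) ω ∈ tagHole X z u :=
    act_mem_tagHole hX (swap_apply_left _ _) (swap_apply_right _ _)
  have m3 : ∀ ω ∈ tagHole X z u, act (swap u w) ω ∈ tagHole X z w :=
    act_mem_tagHole hX (swap_apply_of_ne_of_ne (Ne.symm huz) (Ne.symm hwz))
      (swap_apply_left _ _)
  have m4 : ∀ ω ∈ tagHole X z w, act (swap z w) ω ∈ tagHole X w z :=
    act_mem_tagHole hX (swap_apply_left _ _) (swap_apply_right _ _)
  have i1 := incr_mul_le F (Y := tagHole X u w)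
    (τ₁ := swap z w * (swap u w * (swap u z * swap w z))) (swap u z)
    (fun ω hω => m4 _ (m3 _ (m2 _ (m1 ω hω))))
  have i2 := incr_mul_le F (Y := tagHole X u w)
    (τ₁ := swap u w * (swap u z * swap w z)) (swap z w)
    (fun ω hω => m3 _ (m2 _ (m1 ω hω)))
  have i3 := incr_mul_le F (Y := tagHole X u w)
    (τ₁ := swap u z * swap w z) (swap u w) (fun ω hω => m2 _ (m1 ω hω))
  have i4 := incr_mul_le F (Y := tagHole X u w) (τ₁ := swap w z) (swap u z) m1
  rw [← hid] at i1
  have j1 := (incr_mono F (tagHole_subset X u w) (swap w z)).trans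
    (hbulk u w z (Ne.symm huw) (Ne.symm huz))
  have j2 := (incr_mono F (tagHole_subset X z u) (swap u w)).trans (hbulk z u w huz hwz)
  have j3 := (incr_mono F (tagHole_subset X w z) (swap u z)).trans
    (hbulk w u z huw (Ne.symm hwz))
  linarith

lemma incr_tagHole_path_le (hX : ∀ τ : Perm V, ∀ ω ∈ X, act τ ω ∈ X) {s : V → ℝ}
    (hs : ∀ x, 0 ≤ s x)
    (hbulk : ∀ x a b, a ≠ x → b ≠ x → incr F (tagAt X x) (swap a b) ≤ s x)
    (p : ℕ → V) (m : ℕ) :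
    incr F (tagHole X (p 0) (p m)) (swap (p 0) (p m)) ≤
      ∑ k ∈ Finset.range m, (incr F (tagHole X (p k) (p (k + 1))) (swap (p k) (p (k + 1))) +
        (s (p 0) + s (p k) + s (p (k + 1)))) := by
  induction m with
  | zero => rw [incr_swap_self]; simp
  | succ m ih =>
    rw [Finset.sum_range_succ]
    have := incr_tagHole_trans F hX hs hbulk (p 0) (p (m + 1)) (p m)
    linarith

end quasiTriangle

section gridBounds

variable {d L : ℕ} [NeZero L]
  {X : Finset ((Fin d → Fin L) × ((Fin d → Fin L) → Bool))}
  (F : (Fin d → Fin L) × ((Fin d → Fin L) → Bool) → ℝ)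

lemma rail_zero (v : Fin d → Fin L) (i : Fin d) (c : Fin L) :
    rail v i c 0 = Function.update v i c := by
  unfold rail
  congr 1
  exact Fin.ext (by simp)

lemma rail_sub (v : Fin d → Fin L) (i : Fin d) {c c' : Fin L} (h : c < c') :
    rail v i c ((c' : ℕ) - c) = Function.update v i c' := by
  unfold rail
  congr 1
  refine Fin.ext ?_
  have : (c : ℕ) < c' := h
  rw [Fin.val_ofNat, Nat.add_sub_cancel' this.le, Nat.mod_eq_of_lt c'.isLt]

lemma incr_tagAt_update_le (hX : ∀ τ : Perm (Fin d → Fin L), ∀ ω ∈ X, act τ ω ∈ X)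
    (hL : 2 ≤ L) {i j : Fin d} (hij : i ≠ j) {x u : Fin d → Fin L} {c : Fin L} (hu : u ≠ x)
    (hc : Function.update u i c ≠ x) :
    incr F (tagAt X x) (swap u (Function.update u i c)) ^ 2 ≤
      1200 * L * railWeight (edgeEnergyAt X F x) i j u := by
  have he : ∀ a b, 0 ≤ edgeEnergyAt X F x a b := edgeEnergyAt_nonneg X F x
  have key : ∀ b b' : Fin L, b < b' → Function.update u i b ≠ x → Function.update u i b' ≠ x →
      incr F (tagAt X x) (swap (Function.update u i b) (Function.update u i b')) ^ 2 ≤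
      1200 * L * railWeight (edgeEnergyAt X F x) i j u := by
    intro b b' hb h1 h2
    have hb' : (b : ℕ) < b' := hb
    have h := incr_tagAt_ladder_le F hX (x := x) (rail u i b) (rail (mate j u) i b)
      (m := (b' : ℕ) - b) (by omega) (fun s _ t _ => rail_ne hL u hij b s t)
      (by rwa [rail_zero]) (by rwa [rail_sub u i hb])
    rw [rail_zero, rail_sub u i hb] at h
    have h3 := sum_ladderWeight_sq_le hL he hij u (a := b) (m := (b' : ℕ) - b) (by omega)
    have h4 := pow_le_pow_left₀ (incr_nonneg _ _ _) h 2
    rw [mul_pow] at h4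
    linarith
  have hnn := railWeight_nonneg he i j u
  have hself : Function.update u i (u i) = u := Function.update_eq_self i u
  rcases lt_trichotomy (u i) c with h | h | h
  · have := key _ _ h (by rwa [hself]) hc
    rwa [hself] at this
  · rw [← h, hself, incr_swap_self, zero_pow two_ne_zero]
    positivity
  · have := key _ _ h hc (by rwa [hself])
    rwa [hself, swap_comm] at this

lemma tagIncr_update_le (hX : ∀ τ : Perm (Fin d → Fin L), ∀ ω ∈ X, act τ ω ∈ X)
    (hT : ∀ ω ∈ X, ω.2 ω.1 = true) (hL : 2 ≤ L) {i j : Fin d} (hij : i ≠ j)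
    (u : Fin d → Fin L) (c : Fin L) :
    tagIncr X F u (Function.update u i c) ≤ 1200 * L * railWeight (edgeEnergy X F) i j u := by
  have he : ∀ a b, 0 ≤ edgeEnergy X F a b := edgeEnergy_nonneg X F
  have key : ∀ b b' : Fin L, b < b' →
      tagIncr X F (Function.update u i b) (Function.update u i b') ≤
      1200 * L * railWeight (edgeEnergy X F) i j u := by
    intro b b' hb
    have hb' : (b : ℕ) < b' := hb
    have hlt : (b : ℕ) + ((b' : ℕ) - b) < L := by omega
    have h := incr_tagHole_ladder_le F hX hT (rail u i b) (rail (mate j u) i b)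
      (m := (b' : ℕ) - b) (by omega) (rail_inj u i hlt) (rail_inj _ i hlt)
      (fun s _ t _ => rail_ne hL u hij b s t)
    rw [rail_zero, rail_sub u i hb] at h
    have h3 := sum_ladderWeight_sq_le hL he hij u (a := b) (m := (b' : ℕ) - b) hlt
    have h4 := pow_le_pow_left₀ (incr_nonneg _ _ _) h 2
    rw [mul_pow] at h4
    unfold tagIncr
    linarith
  have hnn := railWeight_nonneg he i j u
  have hself : Function.update u i (u i) = u := Function.update_eq_self i u
  rcases lt_trichotomy (u i) c with h | h | h
  · have := key _ _ h
    rwa [hself] at this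
  · rw [← h, hself, tagIncr, incr_swap_self, zero_pow two_ne_zero]
    positivity
  · have := key _ _ h
    rwa [hself, tagIncr_comm F hX] at this

lemma exists_other_direction (hd : 2 ≤ d) : ∃ o : Fin d → Fin d, ∀ i, i ≠ o i := by
  have : Nontrivial (Fin d) := Fin.nontrivial_iff_two_le.2 hd
  exact ⟨fun i => (exists_ne i).choose, fun i => (exists_ne i).choose_spec.symm⟩

lemma bulkIncr_le (hX : ∀ τ : Perm (Fin d → Fin L), ∀ ω ∈ X, act τ ω ∈ X) (hL : 2 ≤ L)
    {o : Fin d → Fin d} (ho : ∀ i, i ≠ o i) (x u w : Fin d → Fin L) :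
    bulkIncr X F x u w ≤ 4800 * d * L *
      ∑ k : Fin d, (railWeight (edgeEnergyAt X F x) k (o k) (route u w k) +
        railWeight (edgeEnergyAt X F x) k (o k) (route w u k)) := by
  have he : ∀ a b, 0 ≤ edgeEnergyAt X F x a b := edgeEnergyAt_nonneg X F x
  have hR : ∀ k v, 0 ≤ railWeight (edgeEnergyAt X F x) k (o k) v :=
    fun k v => railWeight_nonneg he k (o k) v
  have key : ∀ u w : Fin d → Fin L, (∀ k, route u w k ≠ x) →
      incr F (tagAt X x) (swap u w) ^ 2 ≤ 4800 * d * L *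
        ∑ k : Fin d, railWeight (edgeEnergyAt X F x) k (o k) (route u w k) := by
    intro u w h
    have h1 := incr_tagAt_path_le F hX (route u w) d fun t _ => h t
    rw [route_zero, route_last, Finset.sum_range] at h1
    have h2 := pow_le_pow_left₀ (incr_nonneg _ _ _) h1 2
    have h3 := sq_sum_le_card_mul_sum_sq (s := (Finset.univ : Finset (Fin d)))
      (f := fun k => incr F (tagAt X x) (swap (route u w k) (route u w ((k : ℕ) + 1))))
    have h4 : ∑ k : Fin d, incr F (tagAt X x)
        (swap (route u w k) (route u w ((k : ℕ) + 1))) ^ 2 ≤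
        ∑ k : Fin d, 1200 * L * railWeight (edgeEnergyAt X F x) k (o k) (route u w k) := by
      refine Finset.sum_le_sum fun k _ => ?_
      have := h ((k : ℕ) + 1)
      rw [route_succ] at this ⊢
      exact incr_tagAt_update_le F hX hL (ho k) (h k) this
    rw [← Finset.mul_sum] at h4
    rw [mul_pow] at h2
    rw [Finset.card_univ, Fintype.card_fin] at h3
    have h5 := mul_le_mul_of_nonneg_left h4 (Nat.cast_nonneg (α := ℝ) d)
    linarith
  have hsum : ∀ u w : Fin d → Fin L,
      0 ≤ ∑ k : Fin d, railWeight (edgeEnergyAt X F x) k (o k) (route u w k) :=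
    fun u w => Finset.sum_nonneg fun k _ => hR k _
  rw [Finset.sum_add_distrib, mul_add]
  have n1 : 0 ≤ 4800 * (d : ℝ) * L *
      ∑ k : Fin d, railWeight (edgeEnergyAt X F x) k (o k) (route u w k) := by
    have := hsum u w; positivity
  have n2 : 0 ≤ 4800 * (d : ℝ) * L *
      ∑ k : Fin d, railWeight (edgeEnergyAt X F x) k (o k) (route w u k) := by
    have := hsum w u; positivity
  unfold bulkIncr
  split_ifs with h
  · rcases route_avoids h.1 h.2 with h' | h'
    · have := key u w h'
      linarith
    · have := key w u h'
      rw [swap_comm] at this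
      linarith
  · linarith

lemma bulkIncr_le_totalWeight (hX : ∀ τ : Perm (Fin d → Fin L), ∀ ω ∈ X, act τ ω ∈ X)
    (hL : 2 ≤ L) (hd : 2 ≤ d) (x u w : Fin d → Fin L) :
    bulkIncr X F x u w ≤ 19200 * d ^ 2 * L * totalWeight (edgeEnergyAt X F x) := by
  obtain ⟨o, ho⟩ := exists_other_direction hd
  have he : ∀ a b, 0 ≤ edgeEnergyAt X F x a b := edgeEnergyAt_nonneg X F x
  have h1 : ∑ k : Fin d, (railWeight (edgeEnergyAt X F x) k (o k) (route u w k) +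
        railWeight (edgeEnergyAt X F x) k (o k) (route w u k)) ≤
      ∑ _k : Fin d, 4 * totalWeight (edgeEnergyAt X F x) := by
    refine Finset.sum_le_sum fun k _ => ?_
    have h2 := railWeight_le he k (o k) (route u w k)
    have h3 := railWeight_le he k (o k) (route w u k)
    linarith
  rw [Finset.sum_const, Finset.card_univ, Fintype.card_fin, nsmul_eq_mul] at h1
  refine (bulkIncr_le F hX hL ho x u w).trans ?_
  calc _ ≤ 4800 * (d : ℝ) * L * (d * (4 * totalWeight (edgeEnergyAt X F x))) := by gcongr
    _ = _ := by ring

lemma sum_totalWeight_edgeEnergyAt :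
    ∑ x, totalWeight (edgeEnergyAt X F x) = totalWeight (edgeEnergy X F) := by
  unfold totalWeight nodeWeight
  rw [Finset.sum_comm]
  refine Finset.sum_congr rfl fun v _ => ?_
  rw [Finset.sum_comm]
  refine Finset.sum_congr rfl fun z _ => ?_
  split_ifs
  · exact sum_edgeEnergyAt X F v z
  · simp

lemma sum_sum_rail_route_le {e : (Fin d → Fin L) → (Fin d → Fin L) → ℝ}
    (he : ∀ a b, 0 ≤ e a b) {o : Fin d → Fin d} (ho : ∀ i, i ≠ o i) (k : Fin d) :
    ∑ u, ∑ w, railWeight e k (o k) (route u w k) ≤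
      Fintype.card (Fin d → Fin L) * (3 * L * totalWeight e) := by
  rw [sum_route]
  gcongr
  exact sum_railWeight_le he (ho k)

lemma sum_bulkIncr_le (hX : ∀ τ : Perm (Fin d → Fin L), ∀ ω ∈ X, act τ ω ∈ X)
    (hL : 2 ≤ L) (hd : 2 ≤ d) :
    ∑ x, ∑ u, ∑ w, bulkIncr X F x u w ≤ 28800 * d ^ 2 * Fintype.card (Fin d → Fin L) * L ^ 2 *
      totalWeight (edgeEnergy X F) := by
  obtain ⟨o, ho⟩ := exists_other_direction hd
  rw [← sum_totalWeight_edgeEnergyAt F, Finset.mul_sum]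
  refine Finset.sum_le_sum fun x _ => ?_
  have he : ∀ a b, 0 ≤ edgeEnergyAt X F x a b := edgeEnergyAt_nonneg X F x
  set n : ℝ := ((Fintype.card (Fin d → Fin L) : ℕ) : ℝ) with hn
  set E := totalWeight (edgeEnergyAt X F x) with hE
  set R : Fin d → (Fin d → Fin L) → ℝ := fun k v =>
    railWeight (edgeEnergyAt X F x) k (o k) v with hR
  calc ∑ u, ∑ w, bulkIncr X F x u w
      ≤ ∑ u, ∑ w, 4800 * d * L * ∑ k : Fin d, (R k (route u w k) + R k (route w u k)) :=
        Finset.sum_le_sum fun u _ => Finset.sum_le_sum fun w _ => bulkIncr_le F hX hL ho x u w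
    _ = 4800 * d * L * ∑ k : Fin d, (∑ u, ∑ w, R k (route u w k) +
          ∑ u, ∑ w, R k (route w u k)) := by
        simp only [← Finset.mul_sum]
        congr 1
        rw [Finset.sum_congr rfl fun u _ => Finset.sum_comm, Finset.sum_comm]
        simp only [Finset.sum_add_distrib]
    _ ≤ 4800 * d * L * ∑ _k : Fin d, (n * (3 * L * E) + n * (3 * L * E)) := by
        gcongr with k _
        · exact sum_sum_rail_route_le he ho k
        · rw [Finset.sum_comm]
          exact sum_sum_rail_route_le he ho k
    _ = _ := by
        rw [Finset.sum_const, Finset.card_univ, Fintype.card_fin, nsmul_eq_mul]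
        ring

lemma sum_tagIncr_le (hX : ∀ τ : Perm (Fin d → Fin L), ∀ ω ∈ X, act τ ω ∈ X)
    (hT : ∀ ω ∈ X, ω.2 ω.1 = true) (hL : 2 ≤ L) (hd : 2 ≤ d) :
    ∑ u, ∑ w, tagIncr X F u w ≤ 244800 * d ^ 4 * Fintype.card (Fin d → Fin L) * L ^ 2 *
      totalWeight (edgeEnergy X F) := by
  obtain ⟨o, ho⟩ := exists_other_direction hd
  have he : ∀ a b, 0 ≤ edgeEnergy X F a b := edgeEnergy_nonneg X F
  have hEx : ∀ x, 0 ≤ totalWeight (edgeEnergyAt X F x) :=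
    fun x => totalWeight_nonneg (edgeEnergyAt_nonneg X F x)
  set n : ℝ := ((Fintype.card (Fin d → Fin L) : ℕ) : ℝ) with hn
  set E := totalWeight (edgeEnergy X F) with hE
  have hE0 : 0 ≤ E := totalWeight_nonneg he
  set M : (Fin d → Fin L) → ℝ := fun x => 19200 * d ^ 2 * L * totalWeight (edgeEnergyAt X F x)
    with hM
  have hM0 : ∀ x, 0 ≤ M x := fun x => by have := hEx x; positivity
  have hMsum : ∑ x, M x = 19200 * d ^ 2 * L * E := by
    rw [← Finset.mul_sum, sum_totalWeight_edgeEnergyAt]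
  set R : Fin d → (Fin d → Fin L) → ℝ := fun k v => railWeight (edgeEnergy X F) k (o k) v
    with hR
  have hbulk : ∀ x a b, a ≠ x → b ≠ x → incr F (tagAt X x) (swap a b) ≤ √(M x) := by
    intro x a b ha hb
    refine Real.le_sqrt_of_sq_le ?_
    have := bulkIncr_le_totalWeight F hX hL hd x a b
    rwa [bulkIncr, if_pos ⟨ha, hb⟩] at this
  have hpt : ∀ u w, tagIncr X F u w ≤ d * ∑ k : Fin d, 4 * (1200 * L * R k (route u w k) +
      (M u + M (route u w k) + M (route u w (k + 1)))) := by
    intro u w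
    have h1 := incr_tagHole_path_le F hX (fun x => Real.sqrt_nonneg (M x)) hbulk (route u w) d
    rw [route_zero, route_last, Finset.sum_range] at h1
    refine (pow_le_pow_left₀ (incr_nonneg _ _ _) h1 2).trans ?_
    refine sq_sum_le_card_mul_sum_sq.trans ?_
    rw [Finset.card_univ, Fintype.card_fin]
    gcongr with k _
    have h2 := tagIncr_update_le F hX hT hL (ho k) (route u w k) (w k)
    rw [← route_succ] at h2
    unfold tagIncr at h2
    have s1 := Real.sq_sqrt (hM0 u)
    have s2 := Real.sq_sqrt (hM0 (route u w k))
    have s3 := Real.sq_sqrt (hM0 (route u w (k + 1)))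
    have h3 : ∀ a b c e : ℝ, (a + (b + c + e)) ^ 2 ≤ 4 * (a ^ 2 + (b ^ 2 + c ^ 2 + e ^ 2)) := by
      intro a b c e
      nlinarith [sq_nonneg (a - b), sq_nonneg (a - c), sq_nonneg (a - e), sq_nonneg (b - c),
        sq_nonneg (b - e), sq_nonneg (c - e)]
    refine (h3 _ _ _ _).trans ?_
    rw [s1, s2, s3]
    linarith
  have hL1 : (L : ℝ) ≤ L ^ 2 := by
    have : (1 : ℝ) ≤ L := by exact_mod_cast (by omega : 1 ≤ L)
    nlinarith
  have hd1 : (1 : ℝ) ≤ (d : ℝ) ^ 2 := by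
    have : (1 : ℝ) ≤ d := by exact_mod_cast (by omega : 1 ≤ d)
    nlinarith
  have hn0 : 0 ≤ n := Nat.cast_nonneg _
  calc ∑ u, ∑ w, tagIncr X F u w
      ≤ ∑ u, ∑ w, d * ∑ k : Fin d, 4 * (1200 * L * R k (route u w k) +
          (M u + M (route u w k) + M (route u w (k + 1)))) :=
        Finset.sum_le_sum fun u _ => Finset.sum_le_sum fun w _ => hpt u w
    _ = d * ∑ k : Fin d, 4 * (1200 * L * ∑ u, ∑ w, R k (route u w k) +
          (∑ u, ∑ _w : Fin d → Fin L, M u + ∑ u, ∑ w, M (route u w k) +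
            ∑ u, ∑ w, M (route u w (k + 1)))) := by
        simp only [← Finset.mul_sum]
        congr 1
        rw [Finset.sum_congr rfl fun u _ => Finset.sum_comm, Finset.sum_comm]
        simp only [Finset.sum_add_distrib, ← Finset.mul_sum]
    _ ≤ d * ∑ _k : Fin d, 4 * (1200 * L * (n * (3 * L * E)) +
          3 * (n * (19200 * d ^ 2 * L * E))) := by
        have hc : ∑ u, ∑ _w : Fin d → Fin L, M u = n * (19200 * d ^ 2 * L * E) := by
          simp only [Finset.sum_const, Finset.card_univ, nsmul_eq_mul, ← Finset.mul_sum, hMsum, hn]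
        gcongr with k _
        · exact sum_sum_rail_route_le he ho k
        · rw [hc, sum_route M, sum_route M, hMsum]
          linarith
    _ = 4 * d ^ 2 * n * E * (3600 * L ^ 2 + 57600 * d ^ 2 * L) := by
        rw [Finset.sum_const, Finset.card_univ, Fintype.card_fin, nsmul_eq_mul]
        ring
    _ ≤ 4 * d ^ 2 * n * E * (3600 * (d ^ 2 * L ^ 2) + 57600 * d ^ 2 * L ^ 2) := by
        gcongr
        nlinarith [sq_nonneg (L : ℝ)]
    _ = _ := by ring

lemma mul_le_of_exchange_bounds {n K d l E S A B T : ℝ} (hn : 1 ≤ n) (hK0 : 0 ≤ K) (hK : K ≤ n)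
    (hd : 1 ≤ d) (hE : 0 ≤ E) (hA : 0 ≤ A) (hB : 0 ≤ B) (h1 : n * S ≤ T)
    (h2 : K * T ≤ (K + 12) * A + (6 * n + 2) * B)
    (h3 : A ≤ 28800 * d ^ 2 * n * l ^ 2 * E) (h4 : B ≤ 244800 * d ^ 4 * n * l ^ 2 * E) :
    K * S ≤ 2332800 * d ^ 4 * n * l ^ 2 * E := by
  have h6 : 28800 * d ^ 2 * n * l ^ 2 * E ≤ 28800 * d ^ 4 * n * l ^ 2 * E := by
    have : d ^ 2 ≤ d ^ 4 := pow_le_pow_right₀ hd (by norm_num)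
    gcongr
  have h7 : (K + 12) * A ≤ 13 * n * A := by gcongr; linarith
  have h8 : (6 * n + 2) * B ≤ 8 * n * B := by gcongr; linarith
  have h9 : n * A ≤ n * (28800 * d ^ 4 * n * l ^ 2 * E) := by gcongr; linarith
  have h10 : n * B ≤ n * (244800 * d ^ 4 * n * l ^ 2 * E) := by gcongr
  have h11 : K * (n * S) ≤ K * T := by gcongr
  have h5 : n * (K * S) ≤ n * (2332800 * d ^ 4 * n * l ^ 2 * E) := by linarith
  exact le_of_mul_le_mul_left h5 (by linarith)

/-- Spectral gap inequality in the grid, for a set `X` of states with `K` holes. -/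
lemma card_mul_sum_sq_le (hX : ∀ τ : Perm (Fin d → Fin L), ∀ ω ∈ X, act τ ω ∈ X)
    (hT : ∀ ω ∈ X, ω.2 ω.1 = true)
    (htrans : ∀ ω ∈ X, ∀ ω' ∈ X, ∃ τ, act τ ω = ω') {K : ℕ}
    (hK : ∀ ω ∈ X, (Finset.univ.filter fun v => ω.2 v = false).card = K)
    (hKn : K ≤ Fintype.card (Fin d → Fin L)) (hL : 2 ≤ L) (hd : 2 ≤ d) :
    (K : ℝ) * ∑ ω ∈ X, (F ω - (∑ ω ∈ X, F ω) / X.card) ^ 2 ≤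
      2332800 * d ^ 4 * Fintype.card (Fin d → Fin L) * L ^ 2 * totalWeight (edgeEnergy X F) :=
  mul_le_of_exchange_bounds (by exact_mod_cast Fintype.card_pos) (Nat.cast_nonneg K)
    (by exact_mod_cast hKn) (by exact_mod_cast (by omega : 1 ≤ d))
    (totalWeight_nonneg (edgeEnergy_nonneg X F))
    (Finset.sum_nonneg fun _ _ => Finset.sum_nonneg fun _ _ =>
      Finset.sum_nonneg fun _ _ => bulkIncr_nonneg X F _ _ _)
    (Finset.sum_nonneg fun _ _ => Finset.sum_nonneg fun _ _ => tagIncr_nonneg X F _ _)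
    (card_mul_sum_sq_sub_mean_le hX htrans F) (card_mul_sum_exchangeForm_le F hX hT hK)
    (sum_bulkIncr_le F hX hL hd) (sum_tagIncr_le F hX hT hL hd)

end gridBounds
lemma exists_act_eq {ω ω' : V × (V → Bool)} (h : ω.2 ω.1 = true) (h' : ω'.2 ω'.1 = true)
    (hcard : (Finset.univ.filter fun v => ω.2 v = true).card =
      (Finset.univ.filter fun v => ω'.2 v = true).card) : ∃ τ, act τ ω = ω' := by
  have hc : Fintype.card {v // ω.2 v = true} = Fintype.card {v // ω'.2 v = true} := by
    rw [Fintype.card_subtype, Fintype.card_subtype, hcard]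
  let e₀ := Fintype.equivOfCardEq hc
  let e := e₀.trans (swap (e₀ ⟨ω.1, h⟩) ⟨ω'.1, h'⟩)
  have h1 : e.extendSubtype ω.1 = ω'.1 := by
    rw [extendSubtype_apply_of_mem e ω.1 h]
    simp [e]
  have h2 : ∀ u, ω.2 u = ω'.2 (e.extendSubtype u) := by
    intro u
    by_cases hu : ω.2 u = true
    · rw [hu, extendSubtype_mem e u hu]
    · rw [Bool.eq_false_iff.2 hu, Bool.eq_false_iff.2 (extendSubtype_not_mem e u hu)]
  refine ⟨e.extendSubtype, Prod.ext h1 (funext fun v => ?_)⟩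
  simp only [act, Function.comp_apply, h2, apply_symm_apply]

lemma card_filter_act (τ : Perm V) (ω : V × (V → Bool)) :
    (Finset.univ.filter fun v => (act τ ω).2 v = true).card =
      (Finset.univ.filter fun v => ω.2 v = true).card :=
  Finset.card_equiv τ.symm fun v => by
    rw [Finset.mem_filter, Finset.mem_filter]; simp [act]

section transfer

variable {d ℓ : ℕ}

/-- The sites of the box as points of a grid. -/
def gridEquiv (d ℓ : ℕ) : (Fin d → Fin (2 * ℓ + 1)) ≃ Site d ℓ where
  toFun v := ⟨fun j => (v j : ℤ) - ℓ, by
    rw [Box, Finset.mem_Icc]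
    exact ⟨fun j => by have := (v j).isLt; dsimp only; omega,
      fun j => by have := (v j).isLt; dsimp only; omega⟩⟩
  invFun s := fun j => ⟨(s.1 j + ℓ).toNat, by
    have h := Finset.mem_Icc.1 s.2
    have h1 := h.1 j
    have h2 := h.2 j
    dsimp only at h1 h2
    omega⟩
  left_inv v := by
    funext j
    exact Fin.ext (by simp)
  right_inv s := by
    refine Subtype.ext (funext fun j => ?_)
    have h1 := (Finset.mem_Icc.1 s.2).1 j
    dsimp only at h1 ⊢
    omega

lemma siteAdj_gridEquiv {v w : Fin d → Fin (2 * ℓ + 1)} (h : GridAdj v w) :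
    SiteAdj (gridEquiv d ℓ v) (gridEquiv d ℓ w) := by
  obtain ⟨i, h1, h2⟩ := h
  unfold SiteAdj
  simp only [gridEquiv, coe_fn_mk]
  rw [Finset.sum_eq_single i]
  · rcases h2 with h2 | h2 <;> rw [← h2] <;> push_cast <;> ring
  · intro j _ hj
    rw [h1 j hj]; ring
  · simp

/-- The states of the exclusion process as states on the grid. -/
def stateEquiv (d ℓ : ℕ) :
    (Fin d → Fin (2 * ℓ + 1)) × ((Fin d → Fin (2 * ℓ + 1)) → Bool) ≃ TState d ℓ :=
  prodCongr (gridEquiv d ℓ) ((gridEquiv d ℓ).arrowCongr (Equiv.refl Bool))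

/-- The states on the grid with the prescribed number of particles. -/
def gridSlice (d ℓ : ℕ) (ρ : ℝ) :
    Finset ((Fin d → Fin (2 * ℓ + 1)) × ((Fin d → Fin (2 * ℓ + 1)) → Bool)) :=
  Finset.univ.filter fun ω => ω.2 ω.1 = true ∧
    ((Finset.univ.filter fun v => ω.2 v = true).card : ℤ) = ⌊ρ * ((Box d ℓ).card : ℝ)⌋

lemma stateEquiv_mem_taggedSlice (ρ : ℝ)
    (ω : (Fin d → Fin (2 * ℓ + 1)) × ((Fin d → Fin (2 * ℓ + 1)) → Bool)) :
    ω ∈ gridSlice d ℓ ρ ↔ stateEquiv d ℓ ω ∈ taggedSlice d ℓ ρ := by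
  have h : numParticles (stateEquiv d ℓ ω).2 =
      (Finset.univ.filter fun v => ω.2 v = true).card :=
    Finset.card_equiv (gridEquiv d ℓ).symm fun v => by simp [stateEquiv]
  simp only [gridSlice, taggedSlice, Finset.mem_filter, Finset.mem_univ, true_and, h]
  simp [stateEquiv]

lemma sum_gridSlice (ρ : ℝ) (g : TState d ℓ → ℝ) :
    ∑ ω ∈ gridSlice d ℓ ρ, g (stateEquiv d ℓ ω) = ∑ ω ∈ taggedSlice d ℓ ρ, g ω :=
  Finset.sum_equiv (stateEquiv d ℓ) (stateEquiv_mem_taggedSlice ρ) fun _ _ => rfl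

lemma card_gridSlice (ρ : ℝ) : (gridSlice d ℓ ρ).card = (taggedSlice d ℓ ρ).card :=
  Finset.card_equiv (stateEquiv d ℓ) (stateEquiv_mem_taggedSlice ρ)

lemma stateEquiv_act_swap (v z : Fin d → Fin (2 * ℓ + 1))
    (ω : (Fin d → Fin (2 * ℓ + 1)) × ((Fin d → Fin (2 * ℓ + 1)) → Bool)) :
    stateEquiv d ℓ (act (swap v z) ω) =
      (swap (gridEquiv d ℓ v) (gridEquiv d ℓ z) (stateEquiv d ℓ ω).1,
        (stateEquiv d ℓ ω).2 ∘ swap (gridEquiv d ℓ v) (gridEquiv d ℓ z)) := by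
  refine Prod.ext ?_ (funext fun s => ?_)
  · exact (gridEquiv d ℓ).injective.map_swap _ _ _
  · obtain ⟨u, rfl⟩ := (gridEquiv d ℓ).surjective s
    simp [stateEquiv, act, ← (gridEquiv d ℓ).injective.map_swap]

lemma edgeEnergy_gridSlice (ρ : ℝ) (f : TState d ℓ → ℝ) (v z : Fin d → Fin (2 * ℓ + 1)) :
    edgeEnergy (gridSlice d ℓ ρ) (f ∘ stateEquiv d ℓ) v z =
      ∑ ω ∈ taggedSlice d ℓ ρ, rate (gridEquiv d ℓ v) (gridEquiv d ℓ z) ω.2 *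
        (edgeMap (gridEquiv d ℓ v) (gridEquiv d ℓ z) f ω - f ω) ^ 2 := by
  rw [← sum_gridSlice]
  refine Finset.sum_congr rfl fun ω _ => ?_
  simp only [Function.comp_apply, stateEquiv_act_swap, edgeMap, rate, ite_mul, one_mul, zero_mul]
  simp [stateEquiv]

lemma totalWeight_gridSlice_le (ρ : ℝ) (f : TState d ℓ → ℝ) :
    totalWeight (edgeEnergy (gridSlice d ℓ ρ) (f ∘ stateEquiv d ℓ)) ≤
      ∑ y : Site d ℓ, ∑ z : Site d ℓ, if SiteAdj y z then
        ∑ ω ∈ taggedSlice d ℓ ρ, rate y z ω.2 * (edgeMap y z f ω - f ω) ^ 2 else 0 := by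
  rw [← (gridEquiv d ℓ).sum_comp]
  refine Finset.sum_le_sum fun v _ => ?_
  rw [← (gridEquiv d ℓ).sum_comp]
  refine Finset.sum_le_sum fun z _ => ?_
  rw [← edgeEnergy_gridSlice]
  have := edgeEnergy_nonneg (gridSlice d ℓ ρ) (f ∘ stateEquiv d ℓ) v z
  split_ifs with h1 h2 h2
  · exact le_rfl
  · exact absurd (siteAdj_gridEquiv h1) h2
  · exact this
  · exact le_rfl

lemma card_box (d ℓ : ℕ) : (Box d ℓ).card = Fintype.card (Fin d → Fin (2 * ℓ + 1)) := by
  rw [Fintype.card_congr (gridEquiv d ℓ), Fintype.card_coe]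

lemma sum_sq_sub_mean_le (hd : 2 ≤ d) {ρ : ℝ} (h0 : 0 < ρ) (h1 : ρ < 1) (hℓ : 1 ≤ ℓ)
    (f : TState d ℓ → ℝ) :
    ∑ ω ∈ taggedSlice d ℓ ρ, (f ω - taggedExp d ℓ ρ f) ^ 2 ≤
      41990400 * d ^ 4 / (1 - ρ) * (ℓ : ℝ) ^ 2 * (1 / 2 * ∑ y : Site d ℓ, ∑ z : Site d ℓ,
        if SiteAdj y z then
          ∑ ω ∈ taggedSlice d ℓ ρ, rate y z ω.2 * (edgeMap y z f ω - f ω) ^ 2 else 0) := by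
  have hW := totalWeight_gridSlice_le ρ f
  set W := ∑ y : Site d ℓ, ∑ z : Site d ℓ, if SiteAdj y z then
        ∑ ω ∈ taggedSlice d ℓ ρ, rate y z ω.2 * (edgeMap y z f ω - f ω) ^ 2 else 0 with hWdef
  set E := totalWeight (edgeEnergy (gridSlice d ℓ ρ) (f ∘ stateEquiv d ℓ)) with hE
  have hE0 : 0 ≤ E := totalWeight_nonneg (edgeEnergy_nonneg _ _)
  set n := Fintype.card (Fin d → Fin (2 * ℓ + 1)) with hn
  have hn0 : (0 : ℝ) < n := by exact_mod_cast Fintype.card_pos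
  have hX : ∀ τ : Perm (Fin d → Fin (2 * ℓ + 1)), ∀ ω ∈ gridSlice d ℓ ρ,
      act τ ω ∈ gridSlice d ℓ ρ := by
    intro τ ω hω
    simp only [gridSlice, Finset.mem_filter, Finset.mem_univ, true_and, card_filter_act] at hω ⊢
    exact ⟨by simpa [act] using hω.1, hω.2⟩
  have hT : ∀ ω ∈ gridSlice d ℓ ρ, ω.2 ω.1 = true := fun ω hω => (Finset.mem_filter.1 hω).2.1
  have hP : ∀ ω ∈ gridSlice d ℓ ρ, ((Finset.univ.filter fun v => ω.2 v = true).card : ℤ) =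
      ⌊ρ * (n : ℝ)⌋ := fun ω hω => by
    rw [hn, ← card_box]; exact (Finset.mem_filter.1 hω).2.2
  have htrans : ∀ ω ∈ gridSlice d ℓ ρ, ∀ ω' ∈ gridSlice d ℓ ρ, ∃ τ, act τ ω = ω' :=
    fun ω hω ω' hω' => exists_act_eq (hT ω hω) (hT ω' hω')
      (by exact_mod_cast (hP ω hω).trans (hP ω' hω').symm)
  have hK : ∀ ω ∈ gridSlice d ℓ ρ, (Finset.univ.filter fun v => ω.2 v = false).card =
      n - ⌊ρ * (n : ℝ)⌋₊ := by
    intro ω hω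
    have h2 := Finset.card_filter_add_card_filter_not (s := Finset.univ)
      (fun v => ω.2 v = true)
    rw [Finset.card_univ] at h2
    simp only [Bool.not_eq_true] at h2
    have h3 : (Finset.univ.filter fun v => ω.2 v = true).card = ⌊ρ * (n : ℝ)⌋₊ := by
      have h4 := hP ω hω
      rw [← Int.natCast_floor_eq_floor (by positivity)] at h4
      exact_mod_cast h4
    omega
  have hmain := card_mul_sum_sq_le (f ∘ stateEquiv d ℓ) hX hT htrans hK (Nat.sub_le _ _)
    (by omega) hd
  have hS : ∑ ω ∈ gridSlice d ℓ ρ, ((f ∘ stateEquiv d ℓ) ω -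
      (∑ ω ∈ gridSlice d ℓ ρ, (f ∘ stateEquiv d ℓ) ω) / (gridSlice d ℓ ρ).card) ^ 2 =
      ∑ ω ∈ taggedSlice d ℓ ρ, (f ω - taggedExp d ℓ ρ f) ^ 2 := by
    rw [taggedExp, ← sum_gridSlice ρ f, ← card_gridSlice, ← sum_gridSlice]
    rfl
  rw [hS, ← hE, ← hn] at hmain
  set S := ∑ ω ∈ taggedSlice d ℓ ρ, (f ω - taggedExp d ℓ ρ f) ^ 2 with hSdef
  have hS0 : 0 ≤ S := Finset.sum_nonneg fun _ _ => sq_nonneg _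
  have hKn : (1 - ρ) * n ≤ ((n - ⌊ρ * (n : ℝ)⌋₊ : ℕ) : ℝ) := by
    have h2 : (⌊ρ * (n : ℝ)⌋₊ : ℝ) ≤ ρ * n := Nat.floor_le (by positivity)
    have h3 : (n : ℝ) ≤ ((n - ⌊ρ * (n : ℝ)⌋₊ : ℕ) : ℝ) + (⌊ρ * (n : ℝ)⌋₊ : ℝ) := by
      exact_mod_cast (by omega : n ≤ n - ⌊ρ * (n : ℝ)⌋₊ + ⌊ρ * (n : ℝ)⌋₊)
    linarith
  have hL : ((2 * ℓ + 1 : ℕ) : ℝ) ≤ 3 * ℓ := by exact_mod_cast (by omega : 2 * ℓ + 1 ≤ 3 * ℓ)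
  have hρ : 0 < 1 - ρ := by linarith
  have h5 : n * ((1 - ρ) * S) ≤ n * (2332800 * d ^ 4 * (3 * ℓ) ^ 2 * W) := by
    calc n * ((1 - ρ) * S) = (1 - ρ) * n * S := by ring
      _ ≤ ((n - ⌊ρ * (n : ℝ)⌋₊ : ℕ) : ℝ) * S := by gcongr
      _ ≤ _ := hmain
      _ ≤ 2332800 * d ^ 4 * n * (3 * ℓ) ^ 2 * W := by gcongr
      _ = _ := by ring
  have h6 := le_of_mul_le_mul_left h5 hn0
  have h7 : 41990400 * (d : ℝ) ^ 4 / (1 - ρ) * (ℓ : ℝ) ^ 2 * (1 / 2 * W) =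
      (2332800 * d ^ 4 * (3 * ℓ) ^ 2 * W) / (1 - ρ) := by ring
  rw [h7, le_div_iff₀ hρ]
  linarith

end transfer

end TaggedExclusion

/-- **Spectral gap for the tagged-particle exclusion process in finite volume.**
Fix `d ≥ 2`.  For every `ρ ∈ (0,1)` there exists a constant `C_S(d,ρ) < ∞`, which may be
chosen nondecreasing in `ρ`, such that for every `ℓ ≥ 1` and every `f : Ω_ℓ → ℝ`,
`⟨(f − ⟨f⟩_{ℓ,ρ})²⟩_{ℓ,ρ} ≤ C_S ℓ² Σ_{e ∈ 𝔹_ℓ} ⟨a_e (f^e − f)²⟩_{ℓ,ρ}`.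
The sum over unordered nearest-neighbour edges `e = {y,z} ⊆ B_ℓ` is written as half the
sum over ordered pairs of adjacent sites. -/
theorem tagged_particle_spectral_gap (d : ℕ) (hd : 2 ≤ d) :
    ∃ C : ℝ → ℝ,
      (∀ ρ₁ ∈ Set.Ioo (0 : ℝ) 1, ∀ ρ₂ ∈ Set.Ioo (0 : ℝ) 1, ρ₁ ≤ ρ₂ → C ρ₁ ≤ C ρ₂) ∧
      ∀ ρ ∈ Set.Ioo (0 : ℝ) 1, ∀ ℓ : ℕ, 1 ≤ ℓ → ∀ f : TState d ℓ → ℝ,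
        taggedExp d ℓ ρ (fun ω => (f ω - taggedExp d ℓ ρ f) ^ 2) ≤
          C ρ * (ℓ : ℝ) ^ 2 *
            ((1 : ℝ) / 2 * ∑ y : Site d ℓ, ∑ z : Site d ℓ,
              if SiteAdj y z then
                taggedExp d ℓ ρ (fun ω => rate y z ω.2 * (edgeMap y z f ω - f ω) ^ 2)
              else 0) := by
  refine ⟨fun ρ => 41990400 * (d : ℝ) ^ 4 / (1 - ρ), fun ρ₁ h₁ ρ₂ h₂ h => ?_,
    fun ρ hρ ℓ hℓ f => ?_⟩
  · have h3 : 0 < 1 - ρ₂ := by linarith [h₂.2]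
    dsimp only
    gcongr
  · have hmain := div_le_div_of_nonneg_right
      (TaggedExclusion.sum_sq_sub_mean_le hd hρ.1 hρ.2 hℓ f)
      (Nat.cast_nonneg (α := ℝ) (taggedSlice d ℓ ρ).card)
    refine hmain.trans_eq ?_
    simp only [taggedExp, mul_div_assoc, Finset.sum_div, ite_div, zero_div]

end
end

section
/- Spectral gap for the Kawasaki dynamics with one site pinned: There exists a constant C_K(d) < ∞ such that for every ρ ∈ [0,1] with ⌊ρ|B_ℓ|⌋ ≥ 1, every integer ℓ ≥ 1, every site x ∈ B_ℓ and every function f : {0,1}^{B_ℓ} → ℝ, one has ⟨(f − ⟨f | η(x) = 1⟩_{ℓ,ρ})² | η(x) = 1⟩_{ℓ,ρ} ≤ C_K ℓ² Σ_{e ∈ 𝔹_ℓ, e ∌ x} ⟨(f(η^e) − f(η))² | η(x) = 1⟩_{ℓ,ρ}, where the Dirichlet sum on the right side runs only over edges e not containing x. -/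
open Finset

noncomputable section

open scoped Classical in
/-- The set of configurations with exactly `⌊ρ |B_ℓ|⌋` particles which, moreover, have a
particle at the site `x`. -/
def pinnedSlice (d ℓ : ℕ) (ρ : ℝ) (x : Site d ℓ) : Finset (Config d ℓ) :=
  Finset.univ.filter fun η =>
    (numParticles η : ℤ) = ⌊ρ * ((Box d ℓ).card : ℝ)⌋ ∧ η x = true

/-- Expectation with respect to the uniform probability measure `⟨· | η(x) = 1⟩_{ℓ,ρ}`,
i.e. the measure `⟨·⟩_{ℓ,ρ}` conditioned on the event that the site `x` is occupied. -/
def pinnedExp (d ℓ : ℕ) (ρ : ℝ) (x : Site d ℓ) (g : Config d ℓ → ℝ) : ℝ :=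
  (∑ η ∈ pinnedSlice d ℓ ρ x, g η) / ((pinnedSlice d ℓ ρ x).card : ℝ)

/-- The configuration `η^e` obtained from `η` by exchanging the states of the two
endpoints of the edge `e = {y,z}`. -/
def exch {d ℓ : ℕ} (y z : Site d ℓ) (η : Config d ℓ) : Config d ℓ :=
  η ∘ Equiv.swap y z

section Levels

variable {V : Type*} [Fintype V] [DecidableEq V]

/-- The sum of a function over all supersets with one more element. -/
def sumInsert (f : Finset V → ℝ) (t : Finset V) : ℝ := ∑ a ∈ tᶜ, f (insert a t)

/-- The sum of a function over all subsets with one element less. -/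
def sumErase (g : Finset V → ℝ) (s : Finset V) : ℝ := ∑ a ∈ s, g (s.erase a)

lemma sum_powersetCard_succ_sum_mem (k : ℕ) (F : Finset V → V → ℝ) :
    ∑ s ∈ powersetCard (k + 1) (univ : Finset V), ∑ a ∈ s, F s a =
      ∑ t ∈ powersetCard k (univ : Finset V), ∑ a ∈ tᶜ, F (insert a t) a := by
  rw [Finset.sum_sigma', Finset.sum_sigma']
  refine Finset.sum_bij' (fun p _ => ⟨p.1.erase p.2, p.2⟩) (fun p _ => ⟨insert p.2 p.1, p.2⟩)
    ?_ ?_ ?_ ?_ ?_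
  · rintro ⟨s, a⟩ h
    simp only [mem_sigma, mem_powersetCard, subset_univ, true_and, mem_compl] at h ⊢
    refine ⟨?_, by simp⟩
    rw [card_erase_of_mem h.2, h.1]; rfl
  · rintro ⟨s, a⟩ h
    simp only [mem_sigma, mem_powersetCard, subset_univ, true_and, mem_compl] at h ⊢
    refine ⟨?_, by simp⟩
    rw [card_insert_of_notMem h.2, h.1]
  · rintro ⟨s, a⟩ h
    simp only [mem_sigma, mem_powersetCard, subset_univ, true_and] at h
    simp [insert_erase h.2]
  · rintro ⟨s, a⟩ h
    simp only [mem_sigma, mem_powersetCard, subset_univ, true_and, mem_compl] at h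
    simp [erase_insert h.2]
  · rintro ⟨s, a⟩ h
    simp only [mem_sigma, mem_powersetCard, subset_univ, true_and] at h
    simp [insert_erase h.2]

lemma sum_mul_sumErase (k : ℕ) (f g : Finset V → ℝ) :
    ∑ s ∈ powersetCard (k + 1) (univ : Finset V), f s * sumErase g s =
      ∑ t ∈ powersetCard k (univ : Finset V), sumInsert f t * g t := by
  simp only [sumErase, sumInsert, mul_sum, sum_mul]
  rw [sum_powersetCard_succ_sum_mem k (fun s a => f s * g (s.erase a))]
  refine sum_congr rfl fun t _ => sum_congr rfl fun a ha => ?_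
  rw [erase_insert (by simpa using ha)]

lemma sumInsert_sumErase (g : Finset V → ℝ) (t : Finset V) :
    sumInsert (sumErase g) t =
      sumErase (sumInsert g) t + ((Fintype.card V : ℝ) - 2 * (t.card : ℝ)) * g t := by
  have h1 : sumInsert (sumErase g) t =
      (tᶜ.card : ℝ) * g t + ∑ a ∈ tᶜ, ∑ b ∈ t, g ((insert a t).erase b) := by
    simp only [sumInsert, sumErase]
    rw [← nsmul_eq_mul, ← sum_const, ← sum_add_distrib]
    refine sum_congr rfl fun a ha => ?_
    have ha' : a ∉ t := by simpa using ha
    rw [sum_insert ha', erase_insert ha']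
  have h2 : sumErase (sumInsert g) t =
      (t.card : ℝ) * g t + ∑ b ∈ t, ∑ a ∈ tᶜ, g ((insert a t).erase b) := by
    simp only [sumInsert, sumErase]
    rw [← nsmul_eq_mul, ← sum_const, ← sum_add_distrib]
    refine sum_congr rfl fun b hb => ?_
    rw [compl_erase, sum_insert (by simpa using hb), insert_erase hb]
    congr 1
    refine sum_congr rfl fun a ha => ?_
    have hab : a ≠ b := by
      rintro rfl
      simp [hb] at ha
    rw [erase_insert_of_ne hab]
  have h3 : (tᶜ.card : ℝ) = (Fintype.card V : ℝ) - (t.card : ℝ) := by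
    rw [card_compl, Nat.cast_sub (card_le_univ t)]
  rw [h1, h2, h3, sum_comm]
  ring

/-- The down operator contracts mean-zero functions on the level `k + 1` of the cube. -/
lemma sum_sumInsert_sq_le (k : ℕ) (hk : k + 1 ≤ Fintype.card V) (f : Finset V → ℝ)
    (hf : ∑ s ∈ powersetCard (k + 1) (univ : Finset V), f s = 0) :
    ∑ t ∈ powersetCard k (univ : Finset V), sumInsert f t ^ 2 ≤
      (k : ℝ) * ((Fintype.card V : ℝ) - k - 1) *
        ∑ s ∈ powersetCard (k + 1) (univ : Finset V), f s ^ 2 := by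
  induction k generalizing f with
  | zero =>
    have h := sum_mul_sumErase 0 f (fun _ => (1 : ℝ))
    have h' : ∑ s ∈ powersetCard (0 + 1) (univ : Finset V), f s * sumErase (fun _ => (1 : ℝ)) s
        = ∑ s ∈ powersetCard (0 + 1) (univ : Finset V), f s := by
      refine sum_congr rfl fun s hs => ?_
      simp only [mem_powersetCard] at hs
      simp [sumErase, hs.2]
    rw [h', hf] at h
    simp at h
    simp [← h]
  | succ k ih =>
    set g := sumInsert f with hg
    have hcard : ∀ j, ∀ t ∈ powersetCard j (univ : Finset V), t.card = j := fun j t ht =>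
      (mem_powersetCard.1 ht).2
    have hg0 : ∑ t ∈ powersetCard (k + 1) (univ : Finset V), g t = 0 := by
      have h := sum_mul_sumErase (k + 1) f (fun _ => (1 : ℝ))
      simp only [mul_one] at h
      rw [← h, ← mul_zero ((k : ℝ) + 2), ← hf, mul_sum]
      refine sum_congr rfl fun s hs => ?_
      simp only [sumErase, sum_const, hcard _ s hs, nsmul_eq_mul]
      push_cast
      ring
    have hgb := ih (by omega) g hg0
    have hX : ∑ t ∈ powersetCard (k + 1) (univ : Finset V), g t ^ 2 =
        ∑ s ∈ powersetCard (k + 1 + 1) (univ : Finset V), f s * sumErase g s := by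
      rw [sum_mul_sumErase]
      exact sum_congr rfl fun t _ => by ring
    have hU : ∑ s ∈ powersetCard (k + 1 + 1) (univ : Finset V), sumErase g s ^ 2 =
        ∑ r ∈ powersetCard k (univ : Finset V), sumInsert g r ^ 2 +
          ((Fintype.card V : ℝ) - 2 * (k + 1)) *
            ∑ t ∈ powersetCard (k + 1) (univ : Finset V), g t ^ 2 := by
      have h1 := sum_mul_sumErase (k + 1) (sumErase g) g
      have h2 := sum_mul_sumErase k g (sumInsert g)
      have h3 : ∑ t ∈ powersetCard (k + 1) (univ : Finset V), sumInsert (sumErase g) t * g t =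
          ∑ t ∈ powersetCard (k + 1) (univ : Finset V), g t * sumErase (sumInsert g) t +
          ((Fintype.card V : ℝ) - 2 * (k + 1)) *
            ∑ t ∈ powersetCard (k + 1) (univ : Finset V), g t ^ 2 := by
        rw [mul_sum, ← sum_add_distrib]
        refine sum_congr rfl fun t ht => ?_
        rw [sumInsert_sumErase, hcard _ t ht]
        push_cast
        ring
      simp only [pow_two] at *
      rw [h1, h3, h2]
    have hCS := sum_mul_sq_le_sq_mul_sq (powersetCard (k + 1 + 1) (univ : Finset V)) f (sumErase g)
    rw [← hX] at hCS
    set X := ∑ t ∈ powersetCard (k + 1) (univ : Finset V), g t ^ 2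
    set Y := ∑ s ∈ powersetCard (k + 1 + 1) (univ : Finset V), f s ^ 2
    have hY : 0 ≤ Y := sum_nonneg fun _ _ => sq_nonneg _
    have hX0 : 0 ≤ X := sum_nonneg fun _ _ => sq_nonneg _
    have hN : ((k : ℝ) + 2) ≤ Fintype.card V := by exact_mod_cast hk
    have hlam : 0 ≤ ((k + 1 : ℕ) : ℝ) * ((Fintype.card V : ℝ) - ((k + 1 : ℕ) : ℝ) - 1) := by
      push_cast
      exact mul_nonneg (by positivity) (by linarith)
    rcases hX0.eq_or_lt with h0 | hpos
    · rw [← h0]; exact mul_nonneg hlam hY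
    · have hUle : ∑ s ∈ powersetCard (k + 1 + 1) (univ : Finset V), sumErase g s ^ 2 ≤
          ((k + 1 : ℕ) : ℝ) * ((Fintype.card V : ℝ) - ((k + 1 : ℕ) : ℝ) - 1) * X := by
        rw [hU]
        push_cast
        linarith
      have := hCS.trans (mul_le_mul_of_nonneg_left hUle hY)
      refine le_of_mul_le_mul_right ?_ hpos
      linarith

/-- **Spectral gap of the Bernoulli–Laplace model**, for functions of mean zero. -/
lemma card_mul_sum_sq_le_sum_swap (k : ℕ) (hk : k ≤ Fintype.card V) (f : Finset V → ℝ)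
    (hf : ∑ s ∈ powersetCard k (univ : Finset V), f s = 0) :
    2 * (Fintype.card V : ℝ) * ∑ s ∈ powersetCard k (univ : Finset V), f s ^ 2 ≤
      ∑ a : V, ∑ b : V, ∑ s ∈ powersetCard k (univ : Finset V),
        (f (s.map (Equiv.swap a b).toEmbedding) - f s) ^ 2 := by
  rcases k with _ | k
  · simp at hf
    simp [hf]
  have hD := sum_sumInsert_sq_le k hk f hf
  have hY : ∑ t ∈ powersetCard k (univ : Finset V), ∑ a ∈ tᶜ, f (insert a t) ^ 2 =
      ((k : ℝ) + 1) * ∑ s ∈ powersetCard (k + 1) (univ : Finset V), f s ^ 2 := by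
    rw [← sum_powersetCard_succ_sum_mem k (fun s _ => f s ^ 2), mul_sum]
    refine sum_congr rfl fun s hs => ?_
    rw [sum_const, (mem_powersetCard.1 hs).2]
    simp
  have hexp : ∑ t ∈ powersetCard k (univ : Finset V), ∑ a ∈ tᶜ, ∑ b ∈ tᶜ,
      (f (insert b t) - f (insert a t)) ^ 2 =
      2 * ((Fintype.card V : ℝ) - k) *
          (((k : ℝ) + 1) * ∑ s ∈ powersetCard (k + 1) (univ : Finset V), f s ^ 2) -
        2 * ∑ t ∈ powersetCard k (univ : Finset V), sumInsert f t ^ 2 := by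
    rw [← hY, mul_sum, mul_sum, ← sum_sub_distrib]
    refine sum_congr rfl fun t ht => ?_
    have h3 : (tᶜ.card : ℝ) = (Fintype.card V : ℝ) - k := by
      rw [card_compl, Nat.cast_sub (card_le_univ t), (mem_powersetCard.1 ht).2]
    simp only [sub_sq, sum_add_distrib, sum_sub_distrib, sum_const, nsmul_eq_mul, h3]
    simp only [mul_assoc, ← mul_sum]
    simp only [← sum_mul, sumInsert]
    simp only [← mul_sum]
    ring
  have hle : ∑ t ∈ powersetCard k (univ : Finset V), ∑ a ∈ tᶜ, ∑ b ∈ tᶜ,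
      (f (insert b t) - f (insert a t)) ^ 2 ≤
      ∑ a : V, ∑ b : V, ∑ s ∈ powersetCard (k + 1) (univ : Finset V),
        (f (s.map (Equiv.swap a b).toEmbedding) - f s) ^ 2 := by
    have h1 : ∑ t ∈ powersetCard k (univ : Finset V), ∑ a ∈ tᶜ, ∑ b ∈ tᶜ,
        (f (insert b t) - f (insert a t)) ^ 2 =
        ∑ s ∈ powersetCard (k + 1) (univ : Finset V), ∑ a ∈ s, ∑ b ∈ (s.erase a)ᶜ,
          (f (s.map (Equiv.swap a b).toEmbedding) - f s) ^ 2 := by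
      rw [sum_powersetCard_succ_sum_mem k (fun s a => ∑ b ∈ (s.erase a)ᶜ,
          (f (s.map (Equiv.swap a b).toEmbedding) - f s) ^ 2)]
      refine sum_congr rfl fun t _ => sum_congr rfl fun a ha => ?_
      have ha' : a ∉ t := by simpa using ha
      rw [erase_insert ha']
      refine sum_congr rfl fun b hb => ?_
      have hb' : b ∉ t := by simpa using hb
      have : (insert a t).map (Equiv.swap a b).toEmbedding = insert b t := by
        rw [map_insert]
        congr 1
        · simp
        · ext v
          rw [mem_map_equiv, Equiv.symm_swap]
          by_cases hva : v = a
          · subst hva; simp [ha', hb']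
          by_cases hvb : v = b
          · subst hvb; simp [ha', hb']
          rw [Equiv.swap_apply_of_ne_of_ne hva hvb]
      rw [this]
    rw [h1, sum_congr rfl fun a (_ : a ∈ (univ : Finset V)) => sum_comm, sum_comm]
    refine sum_le_sum fun s _ => ?_
    refine (sum_le_sum fun a _ => sum_le_sum_of_subset_of_nonneg (subset_univ _)
      fun _ _ _ => sq_nonneg _).trans ?_
    exact sum_le_sum_of_subset_of_nonneg (subset_univ _)
      fun _ _ _ => sum_nonneg fun _ _ => sq_nonneg _
  refine le_trans ?_ hle
  rw [hexp]
  linarith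

end Levels

section Displacement

variable {V : Type*} [Fintype V]

lemma sqrt_sum_add_sq_le {ι : Type*} (s : Finset ι) (u v : ι → ℝ) :
    √(∑ i ∈ s, (u i + v i) ^ 2) ≤ √(∑ i ∈ s, u i ^ 2) + √(∑ i ∈ s, v i ^ 2) := by
  refine Real.sqrt_le_iff.2 ⟨by positivity, ?_⟩
  have h := Real.sum_mul_le_sqrt_mul_sqrt s u v
  have hu : 0 ≤ ∑ i ∈ s, u i ^ 2 := sum_nonneg fun _ _ => sq_nonneg _
  have hv : 0 ≤ ∑ i ∈ s, v i ^ 2 := sum_nonneg fun _ _ => sq_nonneg _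
  rw [add_sq, Real.sq_sqrt hu, Real.sq_sqrt hv]
  simp only [add_sq, sum_add_distrib, mul_assoc, ← mul_sum]
  linarith

/-- The `ℓ²` displacement of `f` on the level `k` under a permutation of the ground set. -/
def displacement (k : ℕ) (f : Finset V → ℝ) (σ : Equiv.Perm V) : ℝ :=
  √(∑ s ∈ powersetCard k (univ : Finset V), (f (s.map σ.toEmbedding) - f s) ^ 2)

lemma displacement_nonneg (k : ℕ) (f : Finset V → ℝ) (σ : Equiv.Perm V) :
    0 ≤ displacement k f σ := Real.sqrt_nonneg _

lemma displacement_sq (k : ℕ) (f : Finset V → ℝ) (σ : Equiv.Perm V) :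
    displacement k f σ ^ 2 =
      ∑ s ∈ powersetCard k (univ : Finset V), (f (s.map σ.toEmbedding) - f s) ^ 2 :=
  Real.sq_sqrt (sum_nonneg fun _ _ => sq_nonneg _)

lemma displacement_one (k : ℕ) (f : Finset V → ℝ) : displacement k f 1 = 0 := by
  have h : ∀ s : Finset V, s.map (Equiv.toEmbedding (1 : Equiv.Perm V)) = s := fun s => by
    ext v; rw [mem_map_equiv]; rfl
  simp [displacement, h]

lemma displacement_mul_le (k : ℕ) (f : Finset V → ℝ) (σ τ : Equiv.Perm V) :
    displacement k f (σ * τ) ≤ displacement k f σ + displacement k f τ := by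
  have hmul : ∀ s : Finset V, s.map (σ * τ).toEmbedding =
      (s.map τ.toEmbedding).map σ.toEmbedding := fun s => by
    rw [map_map]; rfl
  have hσ : displacement k f σ = √(∑ s ∈ powersetCard k (univ : Finset V),
      (f ((s.map τ.toEmbedding).map σ.toEmbedding) - f (s.map τ.toEmbedding)) ^ 2) := by
    unfold displacement
    congr 1
    refine (sum_equiv τ.finsetCongr (fun s => ?_) fun s _ => ?_).symm
    · simp [mem_powersetCard]
    · simp
  rw [hσ]
  refine le_trans (le_of_eq ?_) (sqrt_sum_add_sq_le _ _ _)
  unfold displacement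
  congr 1
  refine sum_congr rfl fun s _ => ?_
  rw [hmul]
  ring

lemma displacement_swap_le [DecidableEq V] (k : ℕ) (f : Finset V → ℝ) (a b c : V) :
    displacement k f (Equiv.swap a c) ≤
      displacement k f (Equiv.swap a b) + 2 * displacement k f (Equiv.swap b c) := by
  have hab := displacement_nonneg k f (Equiv.swap a b)
  have hbc := displacement_nonneg k f (Equiv.swap b c)
  rcases eq_or_ne a c with rfl | hac
  · rw [Equiv.swap_self, ← Equiv.Perm.one_def, displacement_one]
    positivity
  rcases eq_or_ne a b with rfl | hne
  · linarith
  rw [Equiv.swap_comm a c, ← Equiv.swap_mul_swap_mul_swap hne hac]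
  have h1 := displacement_mul_le k f (Equiv.swap b c * Equiv.swap a b) (Equiv.swap b c)
  have h2 := displacement_mul_le k f (Equiv.swap b c) (Equiv.swap a b)
  linarith

end Displacement

section Grid

lemma chain_le {S : Type*} (q : S → S → ℝ) (hself : ∀ a, q a a = 0)
    (htri : ∀ a b c, q a c ≤ q a b + 2 * q b c) (c : ℕ → S) {m n : ℕ} (hmn : m ≤ n) :
    q (c m) (c n) ≤ 2 * ∑ j ∈ Ico m n, q (c j) (c (j + 1)) := by
  induction n, hmn using Nat.le_induction with
  | base => simp [hself]
  | succ n hmn ih =>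
    rw [sum_Ico_succ_top hmn]
    linarith [htri (c m) (c n) (c (n + 1))]

variable {d L : ℕ}

/-- Adjacency of two points of the discrete cube `{0, …, L - 1}^d`. -/
abbrev GridAdj (u v : Fin d → Fin L) : Prop :=
  ∑ i, (((u i : ℕ) : ℤ) - ((v i : ℕ) : ℤ)) ^ 2 = 1

/-- Two points of a segment at distance one. -/
abbrev LineAdj (a b : Fin L) : Prop := (a : ℕ) + 1 = b ∨ (b : ℕ) + 1 = a

lemma gridAdj_update (u : Fin d → Fin L) (i : Fin d) {a b : Fin L} (h : LineAdj a b) :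
    GridAdj (Function.update u i a) (Function.update u i b) := by
  unfold GridAdj
  rw [sum_eq_single i]
  · simp only [Function.update_self]
    rcases h with h | h
    · rw [← h]; push_cast; ring
    · rw [← h]; push_cast; ring
  · intro j _ hj
    simp [Function.update_of_ne hj]
  · simp

/-- The value of `q` on the edge leaving `w` in the direction `i`. -/
def edgeStep (q : (Fin d → Fin L) → (Fin d → Fin L) → ℝ) (i : Fin d) (w : Fin d → Fin L) : ℝ :=
  if h : (w i : ℕ) + 1 < L then q w (Function.update w i ⟨w i + 1, h⟩) else 0

variable (q : (Fin d → Fin L) → (Fin d → Fin L) → ℝ)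

lemma edgeStep_nonneg (hq : ∀ a b, 0 ≤ q a b) (i : Fin d) (w : Fin d → Fin L) :
    0 ≤ edgeStep q i w := by
  unfold edgeStep
  split_ifs
  exacts [hq _ _, le_rfl]

lemma line_le_of_le (hq : ∀ a b, 0 ≤ q a b) (hself : ∀ a, q a a = 0)
    (htri : ∀ a b c, q a c ≤ q a b + 2 * q b c) (u : Fin d → Fin L) (i : Fin d) {s t : Fin L}
    (hst : s ≤ t) :
    q (Function.update u i s) (Function.update u i t) ≤
      2 * ∑ r : Fin L, edgeStep q i (Function.update u i r) := by
  set c : ℕ → (Fin d → Fin L) := fun j =>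
    Function.update u i (if h : j < L then ⟨j, h⟩ else s) with hc
  have hcj : ∀ r : Fin L, c r = Function.update u i r := fun r => by simp [hc]
  set H : ℕ → ℝ := fun r => if h : r < L then edgeStep q i (Function.update u i ⟨r, h⟩) else 0
    with hH
  have hH0 : ∀ r, 0 ≤ H r := fun r => by
    simp only [hH]
    split_ifs
    exacts [edgeStep_nonneg q hq _ _, le_rfl]
  have hsum : ∑ r : Fin L, edgeStep q i (Function.update u i r) = ∑ r ∈ range L, H r := by
    rw [sum_range]
    exact sum_congr rfl fun r _ => by simp [hH]
  have hchain := chain_le q hself htri c (show (s : ℕ) ≤ t from hst)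
  rw [hcj, hcj] at hchain
  refine hchain.trans ?_
  rw [hsum]
  refine mul_le_mul_of_nonneg_left ?_ (by norm_num)
  calc ∑ j ∈ Ico (s : ℕ) t, q (c j) (c (j + 1)) = ∑ j ∈ Ico (s : ℕ) t, H j := by
        refine sum_congr rfl fun j hj => ?_
        have hj1 : j + 1 < L := lt_of_le_of_lt (mem_Ico.1 hj).2 t.2
        have hj0 : j < L := by omega
        simp [hH, hc, edgeStep, hj0, hj1]
    _ ≤ ∑ r ∈ range L, H r := by
        refine sum_le_sum_of_subset_of_nonneg (fun j hj => ?_) fun j _ _ => hH0 j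
        exact mem_range.2 ((mem_Ico.1 hj).2.trans t.2)

lemma line_sq_le (hq : ∀ a b, 0 ≤ q a b) (hself : ∀ a, q a a = 0) (hsymm : ∀ a b, q a b = q b a)
    (htri : ∀ a b c, q a c ≤ q a b + 2 * q b c) (u : Fin d → Fin L) (i : Fin d) (t : Fin L) :
    q u (Function.update u i t) ^ 2 ≤
      4 * L * ∑ r : Fin L, edgeStep q i (Function.update u i r) ^ 2 := by
  have h : q u (Function.update u i t) ≤
      2 * ∑ r : Fin L, edgeStep q i (Function.update u i r) := by
    rcases le_total (u i) t with h | h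
    · simpa using line_le_of_le q hq hself htri u i h
    · rw [hsymm]
      simpa using line_le_of_le q hq hself htri u i h
  have hcs := sq_sum_le_card_mul_sum_sq (s := (univ : Finset (Fin L)))
    (f := fun r => edgeStep q i (Function.update u i r))
  simp only [card_univ, Fintype.card_fin] at hcs
  nlinarith [pow_le_pow_left₀ (hq _ _) h 2]

/-- The point whose first `k` coordinates are those of `z`, the others being those of `y`. -/
def hybrid (y z : Fin d → Fin L) (k : ℕ) : Fin d → Fin L :=
  fun j => if (j : ℕ) < k then z j else y j

lemma hybrid_hybrid (y z : Fin d → Fin L) (k : ℕ) :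
    hybrid (hybrid y z k) (hybrid z y k) k = y := by
  ext j
  by_cases h : (j : ℕ) < k <;> simp [hybrid, h]

lemma hybrid_succ (y z : Fin d → Fin L) (i : Fin d) :
    hybrid y z (i + 1) = Function.update (hybrid y z i) i (hybrid z y i i) := by
  ext j
  rcases eq_or_ne j i with rfl | hj
  · simp [hybrid]
  · have : (j : ℕ) ≠ i := fun h => hj (Fin.ext h)
    rw [Function.update_of_ne hj]
    simp only [hybrid]
    congr 2
    simp only [eq_iff_iff]
    omega

lemma sum_hybrid (A : (Fin d → Fin L) → (Fin d → Fin L) → ℝ) (k : ℕ) :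
    ∑ y, ∑ z, A (hybrid y z k) (hybrid z y k) = ∑ y, ∑ z, A y z := by
  simp only [← Fintype.sum_prod_type']
  let φ : (Fin d → Fin L) × (Fin d → Fin L) → (Fin d → Fin L) × (Fin d → Fin L) :=
    fun p => (hybrid p.1 p.2 k, hybrid p.2 p.1 k)
  have hφ : Function.Involutive φ := fun p => by
    simp [φ, hybrid_hybrid]
  exact Equiv.sum_comp hφ.toPerm fun p => A p.1 p.2

lemma sum_update (B : (Fin d → Fin L) → ℝ) (i : Fin d) :
    ∑ u : Fin d → Fin L, ∑ r : Fin L, B (Function.update u i r) = L * ∑ u, B u := by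
  rw [← Fintype.sum_prod_type']
  let φ : (Fin d → Fin L) × Fin L → (Fin d → Fin L) × Fin L :=
    fun p => (Function.update p.1 i p.2, p.1 i)
  have hφ : Function.Involutive φ := fun p => by simp [φ]
  have h := Equiv.sum_comp hφ.toPerm fun p => B p.1
  refine h.trans ?_
  rw [Fintype.sum_prod_type, mul_sum]
  simp

/-- Comparison of the complete graph with the nearest-neighbour graph of a discrete cube. -/
lemma sum_sq_le_sum_edgeStep (hq : ∀ a b, 0 ≤ q a b) (hself : ∀ a, q a a = 0)
    (hsymm : ∀ a b, q a b = q b a) (htri : ∀ a b c, q a c ≤ q a b + 2 * q b c) :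
    ∑ y, ∑ z, q y z ^ 2 ≤ 16 * d * (L : ℝ) ^ (d + 2) * ∑ i, ∑ w, edgeStep q i w ^ 2 := by
  have h1 : ∀ y z : Fin d → Fin L, q y z ^ 2 ≤ 4 * d * ∑ i : Fin d,
      q (hybrid y z i) (Function.update (hybrid y z i) i (hybrid z y i i)) ^ 2 := by
    intro y z
    have hc := chain_le q hself htri (hybrid y z) (Nat.zero_le d)
    have h0 : hybrid y z 0 = y := by ext j; simp [hybrid]
    have hd : hybrid y z d = z := by ext j; simp [hybrid]
    rw [h0, hd, ← range_eq_Ico, sum_range] at hc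
    simp only [hybrid_succ] at hc
    have hcs := sq_sum_le_card_mul_sum_sq (s := (univ : Finset (Fin d)))
      (f := fun i => q (hybrid y z i) (Function.update (hybrid y z i) i (hybrid z y i i)))
    simp only [card_univ, Fintype.card_fin] at hcs
    nlinarith [pow_le_pow_left₀ (hq _ _) hc 2]
  have h2 : ∀ i : Fin d, ∑ u, ∑ v : Fin d → Fin L, q u (Function.update u i (v i)) ^ 2 ≤
      4 * (L : ℝ) ^ (d + 2) * ∑ w, edgeStep q i w ^ 2 := by
    intro i
    calc ∑ u, ∑ v : Fin d → Fin L, q u (Function.update u i (v i)) ^ 2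
        ≤ ∑ u : Fin d → Fin L, ∑ v : Fin d → Fin L,
          4 * L * ∑ r : Fin L, edgeStep q i (Function.update u i r) ^ 2 :=
          sum_le_sum fun u _ => sum_le_sum fun v _ => line_sq_le q hq hself hsymm htri u i (v i)
      _ = 4 * (L : ℝ) ^ (d + 2) * ∑ w, edgeStep q i w ^ 2 := by
          simp only [sum_const, card_univ, Fintype.card_fun, Fintype.card_fin, nsmul_eq_mul,
            ← mul_sum]
          rw [sum_update fun w => edgeStep q i w ^ 2]
          push_cast
          ring
  calc ∑ y, ∑ z, q y z ^ 2
      ≤ ∑ y, ∑ z, 4 * d * ∑ i : Fin d,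
          q (hybrid y z i) (Function.update (hybrid y z i) i (hybrid z y i i)) ^ 2 :=
        sum_le_sum fun y _ => sum_le_sum fun z _ => h1 y z
    _ = 4 * d * ∑ i : Fin d, ∑ y, ∑ z,
          q (hybrid y z i) (Function.update (hybrid y z i) i (hybrid z y i i)) ^ 2 := by
        simp only [← mul_sum]
        congr 1
        rw [sum_comm]
        rw [sum_congr rfl fun y _ => sum_comm]
        rw [sum_comm]
        refine sum_congr rfl fun i _ => ?_
        rw [sum_comm]
    _ = 4 * d * ∑ i : Fin d, ∑ u, ∑ v : Fin d → Fin L, q u (Function.update u i (v i)) ^ 2 := by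
        congr 1
        exact sum_congr rfl fun i _ =>
          sum_hybrid (fun u v => q u (Function.update u i (v i)) ^ 2) i
    _ ≤ 4 * d * ∑ i : Fin d, 4 * (L : ℝ) ^ (d + 2) * ∑ w, edgeStep q i w ^ 2 :=
        mul_le_mul_of_nonneg_left (sum_le_sum fun i _ => h2 i) (by positivity)
    _ = 16 * d * (L : ℝ) ^ (d + 2) * ∑ i, ∑ w, edgeStep q i w ^ 2 := by
        rw [← mul_sum]
        ring

/-- The sum of `q²` over ordered pairs of adjacent points, both different from `x`. -/
def puncturedEnergy (x : Fin d → Fin L) : ℝ :=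
  ∑ u, ∑ v, if GridAdj u v ∧ u ≠ x ∧ v ≠ x then q u v ^ 2 else 0

lemma puncturedEnergy_nonneg (x : Fin d → Fin L) : 0 ≤ puncturedEnergy q x :=
  sum_nonneg fun _ _ => sum_nonneg fun _ _ => by split_ifs <;> positivity

lemma le_sqrt_puncturedEnergy {x u v : Fin d → Fin L} (h : GridAdj u v) (hu : u ≠ x)
    (hv : v ≠ x) : q u v ≤ √(puncturedEnergy q x) := by
  refine Real.le_sqrt_of_sq_le ?_
  have h0 : ∀ u v, 0 ≤ if GridAdj u v ∧ u ≠ x ∧ v ≠ x then q u v ^ 2 else 0 := fun u v => by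
    split_ifs <;> positivity
  refine le_trans ?_ (single_le_sum (f := fun u => ∑ v, if GridAdj u v ∧ u ≠ x ∧ v ≠ x then
    q u v ^ 2 else 0) (fun u _ => sum_nonneg fun v _ => h0 u v) (mem_univ u))
  refine le_trans ?_ (single_le_sum (f := fun v => if GridAdj u v ∧ u ≠ x ∧ v ≠ x then
    q u v ^ 2 else 0) (fun v _ => h0 u v) (mem_univ v))
  exact (if_pos ⟨h, hu, hv⟩).ge

lemma lineAdj_ne {a b : Fin L} (h : LineAdj a b) : a ≠ b := by
  rintro rfl
  unfold LineAdj at h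
  omega

lemma exists_lineAdj (hL : 2 ≤ L) (a : Fin L) : ∃ b : Fin L, LineAdj a b := by
  rcases Nat.lt_or_ge ((a : ℕ) + 1) L with h | h
  · exact ⟨⟨a + 1, h⟩, Or.inl rfl⟩
  · exact ⟨⟨a - 1, by omega⟩, Or.inr (by simp only; omega)⟩

lemma update_ne_self {x : Fin d → Fin L} {i : Fin d} {a : Fin L} (h : x i ≠ a) :
    Function.update x i a ≠ x := fun he => h (by rw [← he]; simp)

/-- Two neighbours of `x` in perpendicular directions are joined by a path avoiding `x`. -/
lemma perpendicular_le (htri : ∀ a b c, q a c ≤ q a b + 2 * q b c) (x : Fin d → Fin L)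
    {i j : Fin d} (hij : i ≠ j) {a b : Fin L} (ha : LineAdj (x i) a) (hb : LineAdj (x j) b) :
    q (Function.update x i a) (Function.update x j b) ≤ 3 * √(puncturedEnergy q x) := by
  set m := Function.update (Function.update x i a) j b with hm
  have hm' : m = Function.update (Function.update x j b) i a := Function.update_comm hij _ _ _
  have hmx : m ≠ x := fun he => lineAdj_ne hb (by rw [← he, hm]; simp)
  have h1 : GridAdj (Function.update x i a) m := by
    have := gridAdj_update (Function.update x i a) j hb
    rwa [show x j = Function.update x i a j by rw [Function.update_of_ne hij.symm],
      Function.update_eq_self] at this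
  have h2 : GridAdj m (Function.update x j b) := by
    have := gridAdj_update (Function.update x j b) i (show LineAdj a (x i) from Or.symm ha)
    rwa [show x i = Function.update x j b i by rw [Function.update_of_ne hij],
      Function.update_eq_self, ← hm'] at this
  have e1 := le_sqrt_puncturedEnergy q h1 (update_ne_self (lineAdj_ne ha)) hmx
  have e2 := le_sqrt_puncturedEnergy q h2 hmx (update_ne_self (lineAdj_ne hb))
  linarith [htri (Function.update x i a) m (Function.update x j b)]

/-- Two neighbours of `x` are joined by a path of bounded length avoiding `x`. -/
lemma neighbour_le (hd : 2 ≤ d) (hL : 2 ≤ L) (htri : ∀ a b c, q a c ≤ q a b + 2 * q b c)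
    (x : Fin d → Fin L) {i j : Fin d} {a b : Fin L} (ha : LineAdj (x i) a)
    (hb : LineAdj (x j) b) :
    q (Function.update x i a) (Function.update x j b) ≤ 9 * √(puncturedEnergy q x) := by
  have h0 := Real.sqrt_nonneg (puncturedEnergy q x)
  rcases eq_or_ne i j with rfl | hij
  · have : Nontrivial (Fin d) := Fin.nontrivial_iff_two_le.2 hd
    obtain ⟨k, hk⟩ := exists_ne i
    obtain ⟨c, hc⟩ := exists_lineAdj hL (x k)
    have e1 := perpendicular_le q htri x hk.symm ha hc
    have e2 := perpendicular_le q htri x hk hc hb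
    linarith [htri (Function.update x i a) (Function.update x k c) (Function.update x i b)]
  · linarith [perpendicular_le q htri x hij ha hb]

/-- Rerouting the edges at `x` through one of its neighbours. -/
lemma sum_edgeStep_sq_le (hd : 2 ≤ d) (hL : 2 ≤ L) (hq : ∀ a b, 0 ≤ q a b)
    (hsymm : ∀ a b, q a b = q b a) (htri : ∀ a b c, q a c ≤ q a b + 2 * q b c)
    (x : Fin d → Fin L) {j : Fin d} {t : Fin L} (ht : LineAdj (x j) t)
    (hx : q x (Function.update x j t) = 0) (i : Fin d) :
    ∑ w, edgeStep q i w ^ 2 ≤ 649 * puncturedEnergy q x := by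
  set D := puncturedEnergy q x with hD
  have hD0 : 0 ≤ D := puncturedEnergy_nonneg q x
  have hnb : ∀ a : Fin L, LineAdj (x i) a → q x (Function.update x i a) ^ 2 ≤ 324 * D := by
    intro a ha
    have h1 := neighbour_le q hd hL htri x ht ha
    have h2 := htri x (Function.update x j t) (Function.update x i a)
    have h3 : q x (Function.update x i a) ≤ 18 * √D := by linarith
    have h4 := pow_le_pow_left₀ (hq _ _) h3 2
    rw [mul_pow, Real.sq_sqrt hD0] at h4
    linarith
  set p : Fin L := ⟨x i - 1, by omega⟩ with hp
  have hedge : ∀ w, edgeStep q i w ^ 2 ≤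
      (∑ v, if GridAdj w v ∧ w ≠ x ∧ v ≠ x then q w v ^ 2 else 0) +
        ((if w = x then 324 * D else 0) +
          if w = Function.update x i p then 324 * D else 0) := by
    intro w
    have hR : 0 ≤ ∑ v, if GridAdj w v ∧ w ≠ x ∧ v ≠ x then q w v ^ 2 else 0 :=
      sum_nonneg fun v _ => by split_ifs <;> positivity
    have hE1 : 0 ≤ if w = x then 324 * D else 0 := by split_ifs <;> positivity
    have hE2 : 0 ≤ if w = Function.update x i p then 324 * D else 0 := by
      split_ifs <;> positivity
    unfold edgeStep
    by_cases h : (w i : ℕ) + 1 < L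
    · rw [dif_pos h]
      set v := Function.update w i ⟨w i + 1, h⟩ with hv
      by_cases hw : w = x
      · have hb := hnb ⟨x i + 1, by rw [← hw]; exact h⟩ (Or.inl rfl)
        have : q w v ^ 2 ≤ 324 * D := by
          rw [hv]
          subst hw
          exact hb
        rw [if_pos hw]
        linarith
      by_cases hvx : v = x
      · have hxi : ((x i : Fin L) : ℕ) = w i + 1 := by rw [← hvx, hv]; simp
        have hwp : w = Function.update x i (w i) := by
          rw [← hvx, hv, Function.update_idem, Function.update_eq_self]
        have hpw : p = w i := Fin.ext (by simp [hp, hxi])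
        have hb := hnb (w i) (Or.inr hxi.symm)
        rw [← hwp, hsymm] at hb
        rw [hvx, if_pos (show w = Function.update x i p by rwa [hpw])]
        linarith
      · have hadj : GridAdj w v := by
          have := gridAdj_update w i (show LineAdj (w i) ⟨w i + 1, h⟩ from Or.inl rfl)
          rwa [Function.update_eq_self] at this
        have hs := single_le_sum (f := fun v => if GridAdj w v ∧ w ≠ x ∧ v ≠ x then
          q w v ^ 2 else 0) (fun v _ => by split_ifs <;> positivity) (mem_univ v)
        rw [if_pos ⟨hadj, hw, hvx⟩] at hs
        linarith
    · rw [dif_neg h, zero_pow two_ne_zero]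
      linarith
  refine (sum_le_sum fun w _ => hedge w).trans ?_
  rw [sum_add_distrib, sum_add_distrib, sum_ite_eq' univ x, sum_ite_eq' univ]
  simp only [mem_univ, if_true]
  have : (∑ w, ∑ v, if GridAdj w v ∧ w ≠ x ∧ v ≠ x then q w v ^ 2 else 0) = D := rfl
  rw [this]
  linarith

/-- Comparison of the complete graph with the nearest-neighbour graph of a discrete cube
punctured at `x`. -/
lemma sum_sq_le_puncturedEnergy (hd : 2 ≤ d) (hL : 2 ≤ L) (hq : ∀ a b, 0 ≤ q a b)
    (hself : ∀ a, q a a = 0) (hsymm : ∀ a b, q a b = q b a)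
    (htri : ∀ a b c, q a c ≤ q a b + 2 * q b c)
    (x : Fin d → Fin L) {j : Fin d} {t : Fin L} (ht : LineAdj (x j) t)
    (hx : q x (Function.update x j t) = 0) :
    ∑ y, ∑ z, q y z ^ 2 ≤ 10384 * (d : ℝ) ^ 2 * (L : ℝ) ^ (d + 2) * puncturedEnergy q x := by
  refine (sum_sq_le_sum_edgeStep q hq hself hsymm htri).trans ?_
  have h : ∑ i, ∑ w, edgeStep q i w ^ 2 ≤ d * (649 * puncturedEnergy q x) := by
    refine (sum_le_sum fun i _ =>
      sum_edgeStep_sq_le q hd hL hq hsymm htri x ht hx i).trans ?_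
    simp
  refine (mul_le_mul_of_nonneg_left h (by positivity)).trans (le_of_eq ?_)
  ring

end Grid

section Transfer

variable {d ℓ : ℕ}

/-- The configuration with a particle at `x` and at the sites of `s`. -/
def pinnedConfig (x : Site d ℓ) (s : Finset {y : Site d ℓ // y ≠ x}) : Config d ℓ :=
  fun y => if h : y = x then true else decide (⟨y, h⟩ ∈ s)

lemma pinnedConfig_self (x : Site d ℓ) (s : Finset {y : Site d ℓ // y ≠ x}) :
    pinnedConfig x s x = true := by simp [pinnedConfig]

lemma pinnedConfig_coe {x : Site d ℓ} (s : Finset {y : Site d ℓ // y ≠ x})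
    (v : {y : Site d ℓ // y ≠ x}) : pinnedConfig x s v = decide (v ∈ s) := by
  simp [pinnedConfig, v.2]

lemma numParticles_pinnedConfig (x : Site d ℓ) (s : Finset {y : Site d ℓ // y ≠ x}) :
    numParticles (pinnedConfig x s) = s.card + 1 := by
  have h : (univ.filter fun z => pinnedConfig x s z = true) =
      insert x (s.map (Function.Embedding.subtype _)) := by
    ext z
    by_cases hz : z = x
    · simp [hz, pinnedConfig]
    · simp [hz, pinnedConfig]
  rw [numParticles, h, card_insert_of_notMem (by simp), card_map]

lemma exch_pinnedConfig {x : Site d ℓ} (s : Finset {y : Site d ℓ // y ≠ x})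
    (v w : {y : Site d ℓ // y ≠ x}) :
    exch (v : Site d ℓ) w (pinnedConfig x s) =
      pinnedConfig x (s.map (Equiv.swap v w).toEmbedding) := by
  funext z
  by_cases hz : z = x
  · subst hz
    rw [exch, Function.comp_apply, Equiv.swap_apply_of_ne_of_ne v.2.symm w.2.symm,
      pinnedConfig_self, pinnedConfig_self]
  · lift z to {y : Site d ℓ // y ≠ x} using hz
    have h : Equiv.swap (v : Site d ℓ) w z = (Equiv.swap v w z : {y : Site d ℓ // y ≠ x}) := by
      simp only [Equiv.swap_apply_def, Subtype.ext_iff]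
      split_ifs <;> rfl
    rw [exch, Function.comp_apply, h, pinnedConfig_coe, pinnedConfig_coe]
    simp only [mem_map_equiv, Equiv.symm_swap]

lemma sum_pinnedSlice {ρ : ℝ} {k : ℕ} (hk : ⌊ρ * ((Box d ℓ).card : ℝ)⌋ = (k : ℤ) + 1)
    (x : Site d ℓ) (g : Config d ℓ → ℝ) :
    ∑ η ∈ pinnedSlice d ℓ ρ x, g η =
      ∑ s ∈ powersetCard k (univ : Finset {y : Site d ℓ // y ≠ x}), g (pinnedConfig x s) := by
  have hinv : ∀ η : Config d ℓ, η x = true →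
      pinnedConfig x (univ.filter fun v : {y : Site d ℓ // y ≠ x} => η v = true) = η := by
    intro η hη
    funext z
    by_cases hz : z = x
    · rw [hz, pinnedConfig_self, hη]
    · simp [pinnedConfig, hz]
  refine sum_bij' (fun η _ => univ.filter fun v : {y : Site d ℓ // y ≠ x} => η v = true)
    (fun s _ => pinnedConfig x s) ?_ ?_ ?_ ?_ ?_
  · intro η hη
    simp only [pinnedSlice, mem_filter, mem_univ, true_and, hk] at hη
    have hn := numParticles_pinnedConfig x
      (univ.filter fun v : {y : Site d ℓ // y ≠ x} => η v = true)
    rw [hinv η hη.2] at hn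
    rw [mem_powersetCard]
    exact ⟨subset_univ _, by omega⟩
  · intro s hs
    have hc := (mem_powersetCard.1 hs).2
    simp only [pinnedSlice, mem_filter, mem_univ, true_and, hk, pinnedConfig_self, and_true,
      numParticles_pinnedConfig, hc]
    push_cast
    rfl
  · intro η hη
    simp only [pinnedSlice, mem_filter, mem_univ, true_and] at hη
    exact hinv η hη.2
  · intro s _
    ext v
    simp [pinnedConfig_coe]
  · intro η hη
    simp only [pinnedSlice, mem_filter, mem_univ, true_and] at hη
    rw [hinv η hη.2]

lemma pinnedExp_eq {ρ : ℝ} {k : ℕ} (hk : ⌊ρ * ((Box d ℓ).card : ℝ)⌋ = (k : ℤ) + 1)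
    (x : Site d ℓ) (g : Config d ℓ → ℝ) :
    pinnedExp d ℓ ρ x g =
      (∑ s ∈ powersetCard k (univ : Finset {y : Site d ℓ // y ≠ x}), g (pinnedConfig x s)) /
        ((powersetCard k (univ : Finset {y : Site d ℓ // y ≠ x})).card : ℝ) := by
  have h := sum_pinnedSlice hk x fun _ => 1
  simp only [sum_const, nsmul_eq_mul, mul_one] at h
  rw [pinnedExp, sum_pinnedSlice hk x, h]

/-- The box as a discrete cube of side `2ℓ + 1`. -/
def gridEquiv (d ℓ : ℕ) : (Fin d → Fin (2 * ℓ + 1)) ≃ Site d ℓ where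
  toFun u := ⟨fun i => ((u i : ℕ) : ℤ) - ℓ, by
    rw [Box, Finset.mem_Icc]
    refine ⟨fun i => ?_, fun i => ?_⟩
    · simp only
      omega
    · have := (u i).2
      simp only
      omega⟩
  invFun y := fun i => ⟨((y : Fin d → ℤ) i + ℓ).toNat, by
    have h := Finset.mem_Icc.1 y.2
    have h1 := h.1 i
    have h2 := h.2 i
    simp only at h1 h2
    omega⟩
  left_inv u := by
    funext i
    ext
    simp
  right_inv y := by
    ext i
    have h := (Finset.mem_Icc.1 y.2).1 i
    simp only at h ⊢
    omega

lemma siteAdj_gridEquiv (u v : Fin d → Fin (2 * ℓ + 1)) :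
    SiteAdj (gridEquiv d ℓ u) (gridEquiv d ℓ v) ↔ GridAdj u v := by
  simp [SiteAdj, GridAdj, gridEquiv]

lemma card_Box (d ℓ : ℕ) : (Box d ℓ).card = (2 * ℓ + 1) ^ d := by
  rw [← Fintype.card_coe, ← Fintype.card_congr (gridEquiv d ℓ)]
  simp

lemma card_site_ne (x : Site d ℓ) :
    Fintype.card {y : Site d ℓ // y ≠ x} + 1 = (2 * ℓ + 1) ^ d := by
  have h : Fintype.card (Site d ℓ) = (2 * ℓ + 1) ^ d := by
    rw [← card_Box d ℓ, Fintype.card_coe]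
  rw [← h, Fintype.card_subtype_compl, Fintype.card_subtype_eq]
  have : 0 < Fintype.card (Site d ℓ) := Fintype.card_pos_iff.2 ⟨x⟩
  omega

lemma sum_subtype_ne (x : Site d ℓ) (F : Site d ℓ → ℝ) (hF : F x = 0) :
    ∑ v : {y : Site d ℓ // y ≠ x}, F v = ∑ y, F y := by
  rw [← sum_subtype (univ.erase x) (by simp), sum_erase _ hF]

lemma sum_pinnedExp_exch {ρ : ℝ} {k : ℕ} (hk : ⌊ρ * ((Box d ℓ).card : ℝ)⌋ = (k : ℤ) + 1)
    (x : Site d ℓ) (f : Config d ℓ → ℝ) (m : ℝ) :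
    (∑ y : Site d ℓ, ∑ z : Site d ℓ, if SiteAdj y z ∧ y ≠ x ∧ z ≠ x then
      pinnedExp d ℓ ρ x (fun η => (f (exch y z η) - f η) ^ 2) else 0) =
    (∑ v : {y : Site d ℓ // y ≠ x}, ∑ w : {y : Site d ℓ // y ≠ x},
      if SiteAdj (v : Site d ℓ) w then
        displacement k (fun s => f (pinnedConfig x s) - m) (Equiv.swap v w) ^ 2 else 0) /
      ((powersetCard k (univ : Finset {y : Site d ℓ // y ≠ x})).card : ℝ) := by
  rw [← sum_subtype_ne x _ (sum_eq_zero fun v _ => if_neg fun h => h.2.1 rfl), sum_div]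
  refine sum_congr rfl fun v _ => ?_
  rw [← sum_subtype_ne x _ (if_neg fun h => h.2.2 rfl), sum_div]
  refine sum_congr rfl fun w _ => ?_
  by_cases h : SiteAdj (v : Site d ℓ) w
  · rw [if_pos ⟨h, v.2, w.2⟩, if_pos h, pinnedExp_eq hk, displacement_sq]
    congr 1
    refine sum_congr rfl fun s _ => ?_
    rw [exch_pinnedConfig]
    ring
  · rw [if_neg fun h' => h h'.1, if_neg h, zero_div]

/-- Comparison of all exchanges with the nearest-neighbour ones, away from the pinned site. -/
lemma sum_displacement_sq_le (hd : 2 ≤ d) (hℓ : 1 ≤ ℓ) (x : Site d ℓ) (k : ℕ)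
    (F : Finset {y : Site d ℓ // y ≠ x} → ℝ) :
    ∑ v, ∑ w, displacement k F (Equiv.swap v w) ^ 2 ≤
      10384 * (d : ℝ) ^ 2 * (2 * (ℓ : ℝ) + 1) ^ (d + 2) *
        ∑ v : {y : Site d ℓ // y ≠ x}, ∑ w : {y : Site d ℓ // y ≠ x},
          if SiteAdj (v : Site d ℓ) w then displacement k F (Equiv.swap v w) ^ 2 else 0 := by
  set e := gridEquiv d ℓ with he
  set x₀ := e.symm x with hx₀
  obtain ⟨t, ht⟩ := exists_lineAdj (show 2 ≤ 2 * ℓ + 1 by omega) (x₀ ⟨0, by omega⟩)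
  set x' := Function.update x₀ ⟨0, by omega⟩ t with hx'
  have hx'ne : x' ≠ x₀ := update_ne_self (lineAdj_ne ht)
  have hex' : e x' ≠ x := fun h => hx'ne (by rw [hx₀, ← h, Equiv.symm_apply_apply])
  let φ : (Fin d → Fin (2 * ℓ + 1)) → {y : Site d ℓ // y ≠ x} :=
    fun u => if h : e u = x then ⟨e x', hex'⟩ else ⟨e u, h⟩
  have hφ : ∀ v : {y : Site d ℓ // y ≠ x}, φ (e.symm v) = v := fun v => by
    simp [φ, v.2]
  have hφx : φ x₀ = φ x' := by
    simp [φ, hx₀, hex']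
  let q : (Fin d → Fin (2 * ℓ + 1)) → (Fin d → Fin (2 * ℓ + 1)) → ℝ :=
    fun a b => displacement k F (Equiv.swap (φ a) (φ b))
  have hself : ∀ v, displacement k F (Equiv.swap v v) = 0 := fun v => by
    rw [Equiv.swap_self]
    exact displacement_one k F
  have hgrid := sum_sq_le_puncturedEnergy q hd (show 2 ≤ 2 * ℓ + 1 by omega)
    (fun a b => displacement_nonneg _ _ _) (fun a => hself _)
    (fun a b => by simp only [q, Equiv.swap_comm])
    (fun a b c => displacement_swap_le _ _ _ _ _) x₀ ht
    (by simp only [q]; rw [hφx]; exact hself _)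
  have hinj : Function.Injective fun v : {y : Site d ℓ // y ≠ x} => e.symm v :=
    fun v w h => by
      have := congrArg φ h
      rwa [hφ, hφ] at this
  have hsub : ∀ A : (Fin d → Fin (2 * ℓ + 1)) → ℝ, (∀ u, 0 ≤ A u) →
      ∑ v : {y : Site d ℓ // y ≠ x}, A (e.symm v) ≤ ∑ u, A u := fun A hA => by
    rw [← sum_image (g := fun v : {y : Site d ℓ // y ≠ x} => e.symm v) (f := A)
      (fun a _ b _ h => hinj h)]
    exact sum_le_sum_of_subset_of_nonneg (subset_univ _) fun u _ _ => hA u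
  have hleft : ∑ v, ∑ w, displacement k F (Equiv.swap v w) ^ 2 ≤ ∑ y, ∑ z, q y z ^ 2 := by
    refine le_trans ?_ (hsub (fun u => ∑ z, q u z ^ 2) fun u => sum_nonneg fun _ _ => sq_nonneg _)
    refine sum_le_sum fun v _ => ?_
    refine le_trans (le_of_eq ?_) (hsub (fun z => q (e.symm v) z ^ 2) fun u => sq_nonneg _)
    simp only [q, hφ]
  have hright : puncturedEnergy q x₀ =
      ∑ v : {y : Site d ℓ // y ≠ x}, ∑ w : {y : Site d ℓ // y ≠ x},
        if SiteAdj (v : Site d ℓ) w then displacement k F (Equiv.swap v w) ^ 2 else 0 := by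
    have hadj : ∀ y z : Site d ℓ, GridAdj (e.symm y) (e.symm z) ↔ SiteAdj y z := fun y z => by
      rw [← siteAdj_gridEquiv]
      simp [he]
    have hne : ∀ y : Site d ℓ, e.symm y ≠ x₀ ↔ y ≠ x := fun y => by simp [hx₀]
    rw [puncturedEnergy, ← e.symm.sum_comp, ← sum_subtype_ne x]
    · refine sum_congr rfl fun v _ => ?_
      rw [← e.symm.sum_comp, ← sum_subtype_ne x]
      · refine sum_congr rfl fun w _ => ?_
        simp only [hadj, hne, v.2, w.2, ne_eq, not_false_eq_true, and_true, q, hφ]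
      · exact if_neg fun h => h.2.2 rfl
    · exact sum_eq_zero fun v _ => if_neg fun h => h.2.1 rfl
  rw [hright] at hgrid
  push_cast at hgrid
  exact hleft.trans hgrid

end Transfer

/-- **Spectral gap for the Kawasaki dynamics with one site pinned.**
Fix `d ≥ 2`.  There exists `C_K(d) < ∞` such that for every `ρ ∈ [0,1]` and `ℓ ≥ 1` with
`⌊ρ |B_ℓ|⌋ ≥ 1`, every site `x ∈ B_ℓ` and every `f : {0,1}^{B_ℓ} → ℝ`,
`⟨(f − ⟨f | η(x)=1⟩_{ℓ,ρ})² | η(x)=1⟩_{ℓ,ρ}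
   ≤ C_K ℓ² Σ_{e ∈ 𝔹_ℓ, e ∌ x} ⟨(f(η^e) − f(η))² | η(x)=1⟩_{ℓ,ρ}`,
where the Dirichlet sum runs only over edges not containing `x`.  The sum over unordered
nearest-neighbour edges `e = {y,z} ⊆ B_ℓ` with `x ∉ e` is written as half the sum over
ordered pairs of adjacent sites, both different from `x`. -/
theorem kawasaki_spectral_gap_pinned (d : ℕ) (hd : 2 ≤ d) :
    ∃ C : ℝ, 0 < C ∧ ∀ ρ ∈ Set.Icc (0 : ℝ) 1, ∀ ℓ : ℕ, 1 ≤ ℓ →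
      1 ≤ ⌊ρ * ((Box d ℓ).card : ℝ)⌋ → ∀ x : Site d ℓ, ∀ f : Config d ℓ → ℝ,
        pinnedExp d ℓ ρ x (fun η => (f η - pinnedExp d ℓ ρ x f) ^ 2) ≤
          C * (ℓ : ℝ) ^ 2 *
            ((1 : ℝ) / 2 * ∑ y : Site d ℓ, ∑ z : Site d ℓ,
              if SiteAdj y z ∧ y ≠ x ∧ z ≠ x then
                pinnedExp d ℓ ρ x (fun η => (f (exch y z η) - f η) ^ 2)
              else 0) := by
  refine ⟨186912 * (d : ℝ) ^ 2, by positivity, ?_⟩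
  intro ρ hρ ℓ hℓ hfloor x f
  obtain ⟨k, hk⟩ : ∃ k : ℕ, ⌊ρ * ((Box d ℓ).card : ℝ)⌋ = (k : ℤ) + 1 :=
    ⟨(⌊ρ * ((Box d ℓ).card : ℝ)⌋ - 1).toNat, by omega⟩
  set V := {y : Site d ℓ // y ≠ x} with hV
  set P := powersetCard k (univ : Finset V) with hP
  have hcardV : Fintype.card V + 1 = (2 * ℓ + 1) ^ d := card_site_ne x
  have hkV : k ≤ Fintype.card V := by
    have h1 : ρ * ((Box d ℓ).card : ℝ) ≤ (((2 * ℓ + 1) ^ d : ℕ) : ℝ) := by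
      rw [card_Box]
      exact mul_le_of_le_one_left (by positivity) hρ.2
    have h2 := Int.floor_le_floor h1
    rw [hk, Int.floor_natCast, ← hcardV] at h2
    push_cast at h2
    omega
  have hPpos : 0 < (P.card : ℝ) := by
    rw [hP, card_powersetCard, card_univ]
    exact_mod_cast Nat.choose_pos hkV
  have hexp := pinnedExp_eq hk x
  set m := pinnedExp d ℓ ρ x f with hm
  set F : Finset V → ℝ := fun s => f (pinnedConfig x s) - m with hF
  have hF0 : ∑ s ∈ P, F s = 0 := by
    have := hexp f
    rw [← hm, eq_div_iff hPpos.ne'] at this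
    simp only [hF, sum_sub_distrib, sum_const, nsmul_eq_mul]
    linarith
  set D := ∑ v : V, ∑ w : V,
    if SiteAdj (v : Site d ℓ) w then displacement k F (Equiv.swap v w) ^ 2 else 0 with hD
  have hD0 : 0 ≤ D := sum_nonneg fun _ _ => sum_nonneg fun _ _ => by split_ifs <;> positivity
  have hgap := card_mul_sum_sq_le_sum_swap k hkV F hF0
  simp only [← displacement_sq] at hgap
  replace hgap := hgap.trans (sum_displacement_sq_le hd hℓ x k F)
  rw [hexp, sum_pinnedExp_exch hk x f m]
  have hL : (1 : ℝ) ≤ ℓ := by exact_mod_cast hℓ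
  have hN : (Fintype.card V : ℝ) + 1 = (2 * (ℓ : ℝ) + 1) ^ d := by exact_mod_cast hcardV
  have hNL : (2 * (ℓ : ℝ) + 1) ^ d ≤ 2 * (Fintype.card V : ℝ) := by
    have h3 : (2 : ℝ) ≤ (2 * (ℓ : ℝ) + 1) ^ d :=
      le_trans (by linarith) (le_self_pow₀ (by linarith) (by omega))
    linarith
  have hsum : ∑ s ∈ P, F s ^ 2 ≤ 10384 * (d : ℝ) ^ 2 * (2 * (ℓ : ℝ) + 1) ^ 2 * D := by
    have hpos : 0 < (2 * (ℓ : ℝ) + 1) ^ d := by positivity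
    refine le_of_mul_le_mul_left ?_ hpos
    have hS : 0 ≤ ∑ s ∈ P, F s ^ 2 := sum_nonneg fun _ _ => sq_nonneg _
    calc (2 * (ℓ : ℝ) + 1) ^ d * ∑ s ∈ P, F s ^ 2
        ≤ 2 * (Fintype.card V : ℝ) * ∑ s ∈ P, F s ^ 2 := mul_le_mul_of_nonneg_right hNL hS
      _ ≤ _ := hgap
      _ = _ := by ring
  have hL2 : (2 * (ℓ : ℝ) + 1) ^ 2 ≤ 9 * (ℓ : ℝ) ^ 2 := by nlinarith
  have hfin : ∑ s ∈ P, F s ^ 2 ≤ 10384 * (d : ℝ) ^ 2 * (9 * (ℓ : ℝ) ^ 2) * D :=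
    hsum.trans (mul_le_mul_of_nonneg_right (mul_le_mul_of_nonneg_left hL2 (by positivity)) hD0)
  calc (∑ s ∈ P, F s ^ 2) / P.card
      ≤ 10384 * (d : ℝ) ^ 2 * (9 * (ℓ : ℝ) ^ 2) * D / P.card :=
        div_le_div_of_nonneg_right hfin hPpos.le
    _ = 186912 * (d : ℝ) ^ 2 * (ℓ : ℝ) ^ 2 * (1 / 2 * (D / P.card)) := by ring

end
end
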